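/- There exists a constant C_p > 0 depending only on p such that for all t1, t2 ≥ 0 with t1 ≤ 1, t2 ≤ 1 and t1 + t2 ≤ 1, sup_{x ≤ 0} | P( S_n ≤ x · √( t1·⟨S⟩_n + t2·[S]_n + (1 − t1 − t2) ) ) − Φ(x) | ≤ C_p · N_n^{1/(2p+1)}. -/

import Mathlib

open MeasureTheory Filter Finset

/-- The standard normal distribution function
`Φ(x) = (2π)^{-1/2} ∫_{-∞}^x e^{-u²/2} du`. -/
noncomputable def stdNormalCDF (x : ℝ) : ℝ :=
  ∫ u in Set.Iic x, (Real.sqrt (2 * Real.pi))⁻¹ * Real.exp (-u ^ 2 / 2)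

/-- standard normal density -/
noncomputable def phi (x : ℝ) : ℝ := (Real.sqrt (2 * Real.pi))⁻¹ * Real.exp (-x ^ 2 / 2)

lemma phi_const : 0 < (Real.sqrt (2 * Real.pi))⁻¹ ∧ (Real.sqrt (2 * Real.pi))⁻¹ ≤ 1 / 2 := by
  have h : (2:ℝ) ≤ Real.sqrt (2 * Real.pi) := by
    apply Real.le_sqrt_of_sq_le
    nlinarith [Real.pi_gt_three]
  refine ⟨by positivity, ?_⟩
  rw [inv_le_comm₀ (by linarith) (by norm_num)]
  simpa using h

lemma phi_nonneg (x : ℝ) : 0 ≤ phi x := by unfold phi; positivity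

lemma phi_bound (x : ℝ) : phi x * (1 + x ^ 2) ^ 3 ≤ 216 := by
  have h := phi_const
  have h2 : (1 + x ^ 2 / 6) ^ 3 ≤ Real.exp (x ^ 2 / 2) := by
    have h3 : 1 + x ^ 2 / 6 ≤ Real.exp (x ^ 2 / 6) := by
      linarith [Real.add_one_le_exp (x ^ 2 / 6)]
    calc (1 + x ^ 2 / 6) ^ 3 ≤ Real.exp (x ^ 2 / 6) ^ 3 := by gcongr
      _ = _ := by rw [← Real.exp_nat_mul]; congr 1; push_cast; ring
  have h4 : (1 + x ^ 2) ^ 3 ≤ 216 * (1 + x ^ 2 / 6) ^ 3 := by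
    have : (1 + x^2) ≤ 6 * (1 + x ^ 2 / 6) := by nlinarith
    calc (1 + x ^ 2) ^ 3 ≤ (6 * (1 + x ^ 2 / 6)) ^ 3 := by gcongr
      _ = _ := by ring
  have h5 : Real.exp (-x ^ 2 / 2) * Real.exp (x ^ 2 / 2) = 1 := by
    rw [← Real.exp_add]; simp [neg_div]
  have h6 := Real.exp_pos (-x ^ 2 / 2)
  unfold phi
  have h7 : Real.exp (-x ^ 2 / 2) * (1 + x ^ 2) ^ 3 ≤ 216 := by
    calc Real.exp (-x ^ 2 / 2) * (1 + x ^ 2) ^ 3 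
        ≤ Real.exp (-x ^ 2 / 2) * (216 * Real.exp (x ^ 2 / 2)) := by gcongr; linarith
      _ = 216 * (Real.exp (-x ^ 2 / 2) * Real.exp (x ^ 2 / 2)) := by ring
      _ = 216 := by rw [h5]; ring
  rw [mul_assoc]
  have h8 : 0 ≤ Real.exp (-x ^ 2 / 2) * (1 + x ^ 2) ^ 3 := by positivity
  nlinarith

lemma phi_le_one (x : ℝ) : phi x ≤ 1 / 2 := by
  have h := phi_const
  have : Real.exp (-x ^ 2 / 2) ≤ 1 := Real.exp_le_one_iff.2 (by nlinarith [sq_nonneg x])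
  unfold phi; nlinarith [Real.exp_pos (-x ^ 2 / 2)]

lemma abs_mul_phi (x : ℝ) : |x * phi x| ≤ 1 := by
  have h := phi_const
  have h3 := Real.add_one_le_exp (x ^ 2 / 2)
  have h5 : Real.exp (-x ^ 2 / 2) * Real.exp (x ^ 2 / 2) = 1 := by
    rw [← Real.exp_add]; simp [neg_div]
  have h6 := Real.exp_pos (-x ^ 2 / 2)
  rw [abs_mul, abs_of_nonneg (phi_nonneg x)]
  unfold phi
  have h7 : |x| ≤ Real.exp (x ^ 2 / 2) := by
    have := sq_abs x
    nlinarith [sq_nonneg (|x| - 1)]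
  have h8 : |x| * Real.exp (-x ^ 2 / 2) ≤ 1 := by
    rw [← h5, mul_comm]; gcongr
  have h9 : 0 ≤ |x| * Real.exp (-x ^ 2 / 2) := by positivity
  nlinarith

lemma integrable_phi : Integrable phi := by
  have := (integrable_exp_neg_mul_sq (b := 1/2) (by norm_num)).const_mul (Real.sqrt (2 * Real.pi))⁻¹
  refine this.congr (Eventually.of_forall fun x => ?_)
  simp only [phi]; congr 2; ring

lemma continuous_phi : Continuous phi := by unfold phi; fun_prop

lemma integral_phi : ∫ x, phi x = 1 := by
  have := ProbabilityTheory.integral_gaussianPDFReal_eq_one 0 (v := 1) (by norm_num)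
  rw [← this]; congr 1; ext x; simp [phi, ProbabilityTheory.gaussianPDFReal]

lemma cdf_def (x : ℝ) : stdNormalCDF x = ∫ u in Set.Iic x, phi u := rfl

lemma cdf_sub (a b : ℝ) : stdNormalCDF b - stdNormalCDF a = ∫ u in a..b, phi u := by
  rw [cdf_def, cdf_def]
  exact intervalIntegral.integral_Iic_sub_Iic integrable_phi.integrableOn integrable_phi.integrableOn

lemma cdf_hasDerivAt (x : ℝ) : HasDerivAt stdNormalCDF (phi x) x := by
  have h : stdNormalCDF = fun y => stdNormalCDF 0 + ∫ u in (0:ℝ)..y, phi u := by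
    ext y; rw [← cdf_sub]; ring
  rw [h]
  exact (continuous_phi.integral_hasStrictDerivAt 0 x).hasDerivAt.const_add _

lemma cdf_nonneg (x : ℝ) : 0 ≤ stdNormalCDF x := by
  rw [cdf_def]; exact integral_nonneg fun x => phi_nonneg x

lemma cdf_le_one (x : ℝ) : stdNormalCDF x ≤ 1 := by
  rw [cdf_def, ← integral_phi]
  exact setIntegral_le_integral integrable_phi (Eventually.of_forall phi_nonneg)

lemma cdf_mono : Monotone stdNormalCDF :=
  monotone_of_hasDerivAt_nonneg cdf_hasDerivAt phi_nonneg

lemma cdf_continuous : Continuous stdNormalCDF :=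
  continuous_iff_continuousAt.2 fun x => (cdf_hasDerivAt x).continuousAt

/-- mean value bound on a symmetric interval -/
lemma mvt0 {g g' : ℝ → ℝ} {h B : ℝ} (hg : ∀ r, HasDerivAt g (g' r) r) (h0 : g 0 = 0)
    (hB : ∀ r, |r| ≤ |h| → |g' r| ≤ B) : |g h| ≤ B * |h| := by
  have := Convex.norm_image_sub_le_of_norm_hasDerivWithin_le (f := g) (f' := g')
    (s := Set.Icc (-|h|) |h|) (x := 0) (y := h) (C := B) (fun x _ => (hg x).hasDerivWithinAt)
    (fun x hx => hB x (abs_le.2 hx)) (convex_Icc _ _) (by simp) (by simp [neg_abs_le, le_abs_self])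
  simpa [h0] using this

/-- mean value bound on a nonnegative interval -/
lemma mvt1 {g g' : ℝ → ℝ} {h B : ℝ} (hh : 0 ≤ h) (hg : ∀ r, 0 ≤ r → HasDerivAt g (g' r) r) (h0 : g 0 = 0)
    (hB : ∀ r, 0 ≤ r → r ≤ h → |g' r| ≤ B) : |g h| ≤ B * h := by
  have := Convex.norm_image_sub_le_of_norm_hasDerivWithin_le (f := g) (f' := g')
    (s := Set.Icc 0 h) (x := 0) (y := h) (C := B) (fun x hx => (hg x hx.1).hasDerivWithinAt)
    (fun x hx => hB x hx.1 hx.2) (convex_Icc _ _) (by simp [hh]) (by simp [hh])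
  simpa [h0, abs_of_nonneg hh] using this

lemma cdf_lip (a b : ℝ) : |stdNormalCDF b - stdNormalCDF a| ≤ |b - a| := by
  have := mvt0 (g := fun r => stdNormalCDF (a + r) - stdNormalCDF a) (g' := fun r => phi (a + r))
    (h := b - a) (B := 1) (fun r => ((cdf_hasDerivAt (a + r)).comp_const_add a r).sub_const _) (by simp)
    (fun r _ => by rw [abs_of_nonneg (phi_nonneg _)]; linarith [phi_le_one (a + r)])
  simpa using this

lemma phi_hasDerivAt (x : ℝ) : HasDerivAt phi (-x * phi x) x := by
  unfold phi
  have h1 : HasDerivAt (fun x : ℝ => -x ^ 2 / 2) (-x) x := by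
    have := ((hasDerivAt_pow 2 x).neg).div_const 2
    refine HasDerivAt.congr_deriv (f := fun x : ℝ => -x ^ 2 / 2) this ?_
    simp; ring
  have := (h1.exp).const_mul (Real.sqrt (2 * Real.pi))⁻¹
  refine HasDerivAt.congr_deriv this ?_
  ring

lemma xphi_hasDerivAt (x : ℝ) : HasDerivAt (fun y => y * phi y) ((1 - x ^ 2) * phi x) x := by
  have := (hasDerivAt_id x).mul (phi_hasDerivAt x)
  refine HasDerivAt.congr_deriv (f := fun y => y * phi y) this ?_
  simp; ring

lemma third_bound (y : ℝ) : |(1 - y ^ 2) * phi y| * (1 + y ^ 2) ≤ 216 := by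
  rw [abs_mul, abs_of_nonneg (phi_nonneg y)]
  have h1 : |1 - y ^ 2| ≤ 1 + y ^ 2 := abs_le.2 ⟨by nlinarith, by nlinarith⟩
  have h2 := phi_bound y
  have h3 := phi_nonneg y
  calc |1 - y ^ 2| * phi y * (1 + y ^ 2) ≤ (1 + y ^ 2) * phi y * (1 + y ^ 2) := by gcongr
    _ = phi y * (1 + y ^ 2) ^ 2 := by ring
    _ ≤ phi y * (1 + y ^ 2) ^ 3 := by gcongr <;> nlinarith
    _ ≤ 216 := h2

lemma taylor_crude (z h : ℝ) :
    |stdNormalCDF (z - h) - stdNormalCDF z + phi z * h + z * phi z / 2 * h ^ 2| ≤ 2 * h ^ 2 := by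
  have d1 : ∀ r, HasDerivAt (fun r => stdNormalCDF (z - r) - stdNormalCDF z + phi z * r)
      (-phi (z - r) + phi z) r := fun r => by
    have := (((cdf_hasDerivAt (z - r)).comp_const_sub z r).sub_const (stdNormalCDF z)).add
      ((hasDerivAt_id r).const_mul (phi z))
    refine HasDerivAt.congr_deriv (f := fun r => stdNormalCDF (z - r) - stdNormalCDF z + phi z * r) this ?_
    simp
  have d2 : ∀ r, HasDerivAt (fun r => -phi (z - r) + phi z) (-((z - r) * phi (z - r))) r := fun r => by
    have := (((phi_hasDerivAt (z - r)).comp_const_sub z r).neg).add_const (phi z)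
    refine HasDerivAt.congr_deriv (f := fun r => -phi (z - r) + phi z) this ?_
    ring
  have b2 : ∀ s, |-phi (z - s) + phi z| ≤ 1 * |s| := fun s =>
    mvt0 (g := fun r => -phi (z - r) + phi z) d2 (by simp) (fun r _ => by rw [abs_neg]; exact abs_mul_phi _)
  have b1 := mvt0 (h := h) (B := |h|) d1 (by simp) (fun r hr => (b2 r).trans (by simpa using hr))
  have e : |h| * |h| = h ^ 2 := by rw [← sq, sq_abs]
  rw [e] at b1
  have b3 : |z * phi z / 2 * h ^ 2| ≤ h ^ 2 := by
    rw [abs_mul, abs_div, abs_of_nonneg (sq_nonneg h), abs_two]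
    have := abs_mul_phi z
    nlinarith [sq_nonneg h]
  exact (abs_add_le _ _).trans (by linarith)

lemma taylor_fine (z h : ℝ) (hh : |h| ≤ 1) :
    |stdNormalCDF (z - h) - stdNormalCDF z + phi z * h + z * phi z / 2 * h ^ 2|
      ≤ 648 / (1 + z ^ 2) * |h| ^ 3 := by
  have d1 : ∀ r, HasDerivAt (fun r => stdNormalCDF (z - r) - stdNormalCDF z + phi z * r
      + z * phi z / 2 * r ^ 2) (-phi (z - r) + phi z + z * phi z * r) r := fun r => by
    have := ((((cdf_hasDerivAt (z - r)).comp_const_sub z r).sub_const (stdNormalCDF z)).add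
      ((hasDerivAt_id r).const_mul (phi z))).add ((hasDerivAt_pow 2 r).const_mul (z * phi z / 2))
    refine HasDerivAt.congr_deriv (f := fun r => stdNormalCDF (z - r) - stdNormalCDF z + phi z * r
      + z * phi z / 2 * r ^ 2) this ?_
    simp; ring
  have d2 : ∀ r, HasDerivAt (fun r => -phi (z - r) + phi z + z * phi z * r)
      (-((z - r) * phi (z - r)) + z * phi z) r := fun r => by
    have := ((((phi_hasDerivAt (z - r)).comp_const_sub z r).neg).add_const (phi z)).add
      ((hasDerivAt_id r).const_mul (z * phi z))
    refine HasDerivAt.congr_deriv (f := fun r => -phi (z - r) + phi z + z * phi z * r) this ?_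
    ring
  have d3 : ∀ r, HasDerivAt (fun r => -((z - r) * phi (z - r)) + z * phi z)
      ((1 - (z - r) ^ 2) * phi (z - r)) r := fun r => by
    have := (((xphi_hasDerivAt (z - r)).comp_const_sub z r).neg).add_const (z * phi z)
    refine HasDerivAt.congr_deriv (f := fun r => -((z - r) * phi (z - r)) + z * phi z) this ?_
    simp
  have b3 : ∀ r, |r| ≤ 1 → |(1 - (z - r) ^ 2) * phi (z - r)| ≤ 648 / (1 + z ^ 2) := fun r hr => by
    rw [le_div_iff₀ (by positivity)]
    have h1 := third_bound (z - r)
    have h2 : 1 + z ^ 2 ≤ 3 * (1 + (z - r) ^ 2) := by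
      have : r ^ 2 ≤ 1 := by rw [← sq_abs]; nlinarith [abs_nonneg r]
      nlinarith [sq_nonneg (z - 2 * r)]
    have := abs_nonneg ((1 - (z - r) ^ 2) * phi (z - r))
    nlinarith
  set M := 648 / (1 + z ^ 2)
  have hM : 0 ≤ M := by positivity
  have b2 : ∀ s, |s| ≤ 1 → |-((z - s) * phi (z - s)) + z * phi z| ≤ M * |s| := fun s hs =>
    mvt0 d3 (by simp) (fun r hr => b3 r (hr.trans hs))
  have b1 : ∀ s, |s| ≤ 1 → |-phi (z - s) + phi z + z * phi z * s| ≤ M * |s| * |s| := fun s hs =>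
    mvt0 d2 (by simp) (fun r hr => (b2 r (hr.trans hs)).trans (by gcongr))
  have := mvt0 (h := h) (B := M * |h| * |h|) d1 (by simp)
    (fun r hr => (b1 r (hr.trans hh)).trans (by gcongr))
  exact this.trans (le_of_eq (by ring))

lemma scale_deriv (z τ : ℝ) (hτ : 0 ≤ τ) :
    HasDerivAt (fun r => z / Real.sqrt (1 + r)) (-(z / Real.sqrt (1 + τ)) / (2 * (1 + τ))) τ := by
  have hp : 0 < 1 + τ := by linarith
  have h1 := ((hasDerivAt_id τ).const_add 1).sqrt (by simpa using hp.ne')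
  have hs : Real.sqrt (1 + τ) ≠ 0 := (Real.sqrt_pos.2 hp).ne'
  have h2 := (hasDerivAt_const τ z).div h1 (by simpa using hs)
  refine HasDerivAt.congr_deriv (f := fun r => z / Real.sqrt (1 + r)) h2 ?_
  have := Real.sq_sqrt hp.le
  simp only [id]
  rw [this]
  field_simp
  ring

lemma scale_deriv1 (z τ : ℝ) (hτ : 0 ≤ τ) :
    HasDerivAt (fun r => stdNormalCDF (z / Real.sqrt (1 + r)))
      (-(z / Real.sqrt (1 + τ) * phi (z / Real.sqrt (1 + τ))) / (2 * (1 + τ))) τ := by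
  have := (cdf_hasDerivAt (z / Real.sqrt (1 + τ))).comp τ (scale_deriv z τ hτ)
  refine HasDerivAt.congr_deriv (f := fun r => stdNormalCDF (z / Real.sqrt (1 + r))) this ?_
  ring

lemma scale_lip (z τ : ℝ) (hτ : 0 ≤ τ) :
    |stdNormalCDF (z / Real.sqrt (1 + τ)) - stdNormalCDF z| ≤ τ := by
  have := mvt1 (g := fun r => stdNormalCDF (z / Real.sqrt (1 + r)) - stdNormalCDF z) (B := 1) hτ
    (fun r hr => (scale_deriv1 z r hr).sub_const _) (by simp) (fun r hr _ => by
      rw [abs_div, abs_neg]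
      have h1 := abs_mul_phi (z / Real.sqrt (1 + r))
      have h2 : 1 ≤ |2 * (1 + r)| := by rw [abs_of_nonneg (by linarith)]; linarith
      exact (div_le_one (by linarith)).2 (by linarith))
  simpa using this

lemma scale_crude (z τ : ℝ) (hτ : 0 ≤ τ) :
    |stdNormalCDF (z / Real.sqrt (1 + τ)) - stdNormalCDF z + z * phi z / 2 * τ| ≤ 2 * τ := by
  have h1 := scale_lip z τ hτ
  have h2 := abs_mul_phi z
  have b3 : |z * phi z / 2 * τ| ≤ τ := by
    rw [abs_mul, abs_div, abs_of_nonneg hτ, abs_two]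
    nlinarith
  exact (abs_add_le _ _).trans (by linarith)

lemma scale_fine (z τ : ℝ) (hτ : 0 ≤ τ) (hτ1 : τ ≤ 1) :
    |stdNormalCDF (z / Real.sqrt (1 + τ)) - stdNormalCDF z + z * phi z / 2 * τ|
      ≤ 648 / (1 + z ^ 2) * τ ^ 2 := by
  have d1 : ∀ r, 0 ≤ r → HasDerivAt (fun r => stdNormalCDF (z / Real.sqrt (1 + r)) - stdNormalCDF z
      + z * phi z / 2 * r) (-(z / Real.sqrt (1 + r) * phi (z / Real.sqrt (1 + r))) / (2 * (1 + r))
        + z * phi z / 2) r := fun r hr => by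
    have := ((scale_deriv1 z r hr).sub_const (stdNormalCDF z)).add
      ((hasDerivAt_id r).const_mul (z * phi z / 2))
    refine HasDerivAt.congr_deriv (f := fun r => stdNormalCDF (z / Real.sqrt (1 + r)) - stdNormalCDF z
      + z * phi z / 2 * r) this ?_
    simp
  have d2 : ∀ r, 0 ≤ r → HasDerivAt (fun r => -(z / Real.sqrt (1 + r) * phi (z / Real.sqrt (1 + r))) / (2 * (1 + r))
        + z * phi z / 2) ((1 - (z / Real.sqrt (1 + r)) ^ 2) * phi (z / Real.sqrt (1 + r)) *
          (z / Real.sqrt (1 + r)) / (4 * (1 + r) ^ 2) +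
          (z / Real.sqrt (1 + r)) * phi (z / Real.sqrt (1 + r)) / (2 * (1 + r) ^ 2)) r := fun r hr => by
    have h1 := ((xphi_hasDerivAt (z / Real.sqrt (1 + r))).comp r (scale_deriv z r hr)).neg
    have h2 : HasDerivAt (fun r : ℝ => 2 * (1 + r)) 2 r := by
      simpa using ((hasDerivAt_id r).const_add 1).const_mul 2
    have h3 := (h1.div h2 (by positivity)).add_const (z * phi z / 2)
    refine HasDerivAt.congr_deriv (f := fun r => -(z / Real.sqrt (1 + r) * phi (z / Real.sqrt (1 + r))) / (2 * (1 + r))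
        + z * phi z / 2) h3 ?_
    have : (1 + r) ≠ 0 := by positivity
    simp only [Function.comp, Pi.neg_apply]
    set ζ := z / Real.sqrt (1 + r)
    field_simp
    ring
  have b2 : ∀ r, 0 ≤ r → r ≤ 1 → |(1 - (z / Real.sqrt (1 + r)) ^ 2) * phi (z / Real.sqrt (1 + r)) *
          (z / Real.sqrt (1 + r)) / (4 * (1 + r) ^ 2) +
          (z / Real.sqrt (1 + r)) * phi (z / Real.sqrt (1 + r)) / (2 * (1 + r) ^ 2)| ≤ 648 / (1 + z ^ 2) := by
    intro r hr hr1
    have hζ : (z / Real.sqrt (1 + r)) ^ 2 * (1 + r) = z ^ 2 := by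
      rw [div_pow, Real.sq_sqrt (by linarith)]; field_simp
    set ζ := z / Real.sqrt (1 + r)
    rw [le_div_iff₀ (by positivity)]
    have e : (1 - ζ ^ 2) * phi ζ * ζ / (4 * (1 + r) ^ 2) + ζ * phi ζ / (2 * (1 + r) ^ 2)
       = (3 - ζ ^ 2) * ζ * phi ζ / (4 * (1 + r) ^ 2) := by field_simp; ring
    rw [e, abs_div, abs_mul, abs_mul, abs_of_nonneg (phi_nonneg ζ)]
    have h1 : |3 - ζ ^ 2| ≤ 4 * (1 + ζ ^ 2) := abs_le.2 ⟨by nlinarith, by nlinarith⟩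
    have h2 : |ζ| ≤ 1 + ζ ^ 2 := by have := sq_abs ζ; nlinarith [sq_nonneg (|ζ| - 1)]
    have h3 : 1 + z ^ 2 ≤ 2 * (1 + ζ ^ 2) := by nlinarith [sq_nonneg ζ]
    have h4 : 4 ≤ |4 * (1 + r) ^ 2| := by rw [abs_of_nonneg (by positivity)]; nlinarith
    have h5 := phi_bound ζ
    have h6 := phi_nonneg ζ
    calc |3 - ζ ^ 2| * |ζ| * phi ζ / |4 * (1 + r) ^ 2| * (1 + z ^ 2)
        ≤ (4 * (1 + ζ ^ 2)) * (1 + ζ ^ 2) * phi ζ / 4 * (2 * (1 + ζ ^ 2)) := by gcongr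
      _ = 2 * (phi ζ * (1 + ζ ^ 2) ^ 3) := by ring
      _ ≤ 648 := by linarith
  set M := 648 / (1 + z ^ 2)
  have hM : 0 ≤ M := by positivity
  have b1 := fun s (hs : 0 ≤ s) (hs1 : s ≤ 1) => mvt1 hs d2 (by simp; ring) (fun r hr hr1 => b2 r hr (hr1.trans hs1))
  have := mvt1 (B := M * τ) hτ d1 (by simp) (fun r hr hr1 => (b1 r hr (hr1.trans hτ1)).trans (by gcongr))
  exact this.trans (le_of_eq (by ring))


/-- the polynomial kernel -/
noncomputable def psi (q z : ℝ) : ℝ := (1 + z ^ 2) ^ (-q)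

lemma psi_pos (q z : ℝ) : 0 < psi q z := Real.rpow_pos_of_pos (by positivity) _

lemma psi_le_one {q : ℝ} (hq : 0 < q) (z : ℝ) : psi q z ≤ 1 :=
  Real.rpow_le_one_of_one_le_of_nonpos (by nlinarith [sq_nonneg z]) (by linarith)

lemma inv_le_psi {q : ℝ} (hq1 : q ≤ 1) (z : ℝ) : 1 / (1 + z ^ 2) ≤ psi q z := by
  have : 1 / (1 + z ^ 2) = (1 + z ^ 2) ^ (-1 : ℝ) := by
    rw [Real.rpow_neg (by positivity), Real.rpow_one, one_div]
  rw [this]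
  exact Real.rpow_le_rpow_of_exponent_le (by nlinarith [sq_nonneg z]) (by linarith)

lemma psi_continuous (q : ℝ) : Continuous (psi q) := by
  unfold psi
  refine Continuous.rpow_const (by fun_prop) (fun x => Or.inl (by positivity))

lemma sq_le_pow {p w a : ℝ} (hp : 1 < p) (hw : 0 < w) (h : w ≤ a) :
    a ^ 2 ≤ w ^ (-(2 * p - 2)) * a ^ (2 * p) := by
  have ha : 0 < a := by linarith
  have h1 : a ^ (2 : ℕ) = a ^ (-(2 * p - 2)) * a ^ (2 * p) := by
    rw [← Real.rpow_add ha, ← Real.rpow_natCast]; congr 1; push_cast; ring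
  rw [h1]
  gcongr ?_ * _
  exact Real.rpow_le_rpow_of_nonpos hw h (by linarith)

lemma taylor_main {p q w : ℝ} (hp : 1 < p) (hq1 : q ≤ 1) (hw : 0 < w) (hw1 : w ≤ 1)
    (z h : ℝ) :
    |stdNormalCDF (z - h) - stdNormalCDF z + phi z * h + z * phi z / 2 * h ^ 2|
      ≤ 648 * (w * h ^ 2 * psi q z + w ^ (-(2 * p - 2)) * |h| ^ (2 * p)) := by
  have hψ := psi_pos q z
  have hr : 0 ≤ w ^ (-(2 * p - 2)) * |h| ^ (2 * p) := by positivity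
  have hl : 0 ≤ w * h ^ 2 * psi q z := by positivity
  rcases le_total |h| w with hc | hc
  · refine (taylor_fine z h (hc.trans hw1)).trans ?_
    have h1 : |h| ^ 3 ≤ w * h ^ 2 := by
      rw [← sq_abs h, pow_succ', ]; gcongr
    have h2 := inv_le_psi hq1 z
    calc 648 / (1 + z ^ 2) * |h| ^ 3 = 648 * (1 / (1 + z ^ 2) * |h| ^ 3) := by ring
      _ ≤ 648 * (psi q z * (w * h ^ 2)) := by gcongr
      _ ≤ _ := by nlinarith
  · refine (taylor_crude z h).trans ?_
    have := sq_le_pow hp hw hc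
    rw [sq_abs] at this
    nlinarith

lemma scale_main {p q w : ℝ} (hp : 1 < p) (hq1 : q ≤ 1) (hw : 0 < w) (hw1 : w ≤ 1)
    (z τ : ℝ) (hτ : 0 ≤ τ) (hτ1 : τ ≤ 1) :
    |stdNormalCDF (z / Real.sqrt (1 + τ)) - stdNormalCDF z + z * phi z / 2 * τ|
      ≤ 648 * (w * τ * psi q z + w ^ (-(2 * p - 2)) * τ ^ p) := by
  have hψ := psi_pos q z
  have hr : 0 ≤ w ^ (-(2 * p - 2)) * τ ^ p := by positivity
  have hl : 0 ≤ w * τ * psi q z := by positivity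
  rcases le_total τ (w ^ 2) with hc | hc
  · refine (scale_fine z τ hτ hτ1).trans ?_
    have h1 : τ ^ 2 ≤ w * τ := by nlinarith
    have h2 := inv_le_psi hq1 z
    calc 648 / (1 + z ^ 2) * τ ^ 2 = 648 * (1 / (1 + z ^ 2) * τ ^ 2) := by ring
      _ ≤ 648 * (psi q z * (w * τ)) := by gcongr
      _ ≤ _ := by nlinarith
  · refine (scale_crude z τ hτ).trans ?_
    have := sq_le_pow hp hw (Real.le_sqrt_of_sq_le hc)
    rw [Real.sq_sqrt hτ, Real.rpow_mul (Real.sqrt_nonneg _), Real.rpow_two, Real.sq_sqrt hτ] at this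
    nlinarith

lemma phi_tail {y u : ℝ} (hy : 0 ≤ y) (hu : y ≤ |u|) :
    phi u ≤ 216 / (1 + y ^ 2) ^ 2 * (1 + u ^ 2)⁻¹ := by
  have h1 := phi_bound u
  have h2 : y ^ 2 ≤ u ^ 2 := by rw [← sq_abs u]; gcongr
  rw [← div_eq_mul_inv, div_div, le_div_iff₀ (by positivity)]
  calc phi u * ((1 + y ^ 2) ^ 2 * (1 + u ^ 2)) ≤ phi u * ((1 + u ^ 2) ^ 2 * (1 + u ^ 2)) := by
        have := phi_nonneg u
        gcongr
    _ = phi u * (1 + u ^ 2) ^ 3 := by ring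
    _ ≤ 216 := h1

lemma phi_tail_int {y : ℝ} (hy : 0 ≤ y) {s : Set ℝ} (hs : MeasurableSet s) (h : ∀ u ∈ s, y ≤ |u|) :
    ∫ u in s, phi u ≤ 700 / (1 + y ^ 2) ^ 2 := by
  have hi : Integrable (fun u : ℝ => 216 / (1 + y ^ 2) ^ 2 * (1 + u ^ 2)⁻¹) :=
    integrable_inv_one_add_sq.const_mul _
  calc ∫ u in s, phi u ≤ ∫ u in s, 216 / (1 + y ^ 2) ^ 2 * (1 + u ^ 2)⁻¹ :=
        setIntegral_mono_on integrable_phi.integrableOn hi.integrableOn hs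
          (fun u hu => phi_tail hy (h u hu))
    _ ≤ ∫ u, 216 / (1 + y ^ 2) ^ 2 * (1 + u ^ 2)⁻¹ :=
        setIntegral_le_integral hi (Eventually.of_forall fun u => by positivity)
    _ = 216 / (1 + y ^ 2) ^ 2 * Real.pi := by
        rw [integral_const_mul, integral_univ_inv_one_add_sq]
    _ ≤ _ := by
        rw [div_mul_eq_mul_div]
        gcongr
        linarith [Real.pi_lt_d2]

lemma cdf_tail_neg {y : ℝ} (hy : 0 ≤ y) : stdNormalCDF (-y) ≤ 700 / (1 + y ^ 2) ^ 2 := by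
  rw [cdf_def]
  refine phi_tail_int hy measurableSet_Iic fun u hu => ?_
  simp only [Set.mem_Iic] at hu
  exact le_trans (by linarith) (neg_le_abs u)

lemma cdf_tail_pos {y : ℝ} (hy : 0 ≤ y) : 1 - stdNormalCDF y ≤ 700 / (1 + y ^ 2) ^ 2 := by
  have : 1 - stdNormalCDF y = ∫ u in Set.Ioi y, phi u := by
    rw [cdf_def, ← integral_phi, ← integral_add_compl (measurableSet_Iic (a := y)) integrable_phi,
      Set.compl_Iic]; ring
  rw [this]
  refine phi_tail_int hy measurableSet_Ioi fun u hu => ?_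
  simp only [Set.mem_Ioi] at hu
  exact le_trans hu.le (le_abs_self u)

lemma bernoulli_neg {q u : ℝ} (hq : 0 < q) (hu : -1 < u) : 1 - q * u ≤ (1 + u) ^ (-q) := by
  have h1 : 0 < 1 + u := by linarith
  rw [Real.rpow_def_of_pos h1]
  have h2 := Real.add_one_le_exp (Real.log (1 + u) * -q)
  have h3 := Real.log_le_sub_one_of_pos h1
  nlinarith

lemma psi_jensen {q : ℝ} (hq : 0 < q) (z h : ℝ) :
    (2 + z ^ 2) ^ (-q) - q * (2 + z ^ 2) ^ (-q - 1) * (2 * z * h + h ^ 2 - 1) ≤ psi q (z + h) := by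
  have h0 : 0 < 2 + z ^ 2 := by positivity
  set u := (2 * z * h + h ^ 2 - 1) / (2 + z ^ 2) with hu
  have h1 : 1 + (z + h) ^ 2 = (2 + z ^ 2) * (1 + u) := by rw [hu]; field_simp; ring
  have h2 : -1 < u := by
    rw [hu, lt_div_iff₀ h0]; nlinarith [sq_nonneg (z + h)]
  unfold psi
  rw [h1, Real.mul_rpow h0.le (by linarith)]
  have h3 := bernoulli_neg hq h2
  have h4 : (2 + z ^ 2) ^ (-q - 1) = (2 + z ^ 2) ^ (-q) / (2 + z ^ 2) := Real.rpow_sub_one h0.ne' _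
  have h5 : 0 < (2 + z ^ 2) ^ (-q) := Real.rpow_pos_of_pos h0 _
  calc _ = (2 + z ^ 2) ^ (-q) * (1 - q * u) := by rw [h4, hu]; field_simp
    _ ≤ _ := by gcongr

lemma psi_half {q : ℝ} (hq : 0 < q) (hq1 : q ≤ 1) (z : ℝ) : psi q z ≤ 2 * (2 + z ^ 2) ^ (-q) := by
  have h1 : (2 + z ^ 2) ^ (-q) ≥ (2 * (1 + z ^ 2)) ^ (-q) :=
    Real.rpow_le_rpow_of_nonpos (by positivity) (by nlinarith [sq_nonneg z]) (by linarith)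
  rw [Real.mul_rpow (by norm_num) (by positivity)] at h1
  have h2 : (1 / 2 : ℝ) ≤ 2 ^ (-q) := by
    calc (1 / 2 : ℝ) = 2 ^ (-1 : ℝ) := by rw [Real.rpow_neg (by norm_num)]; norm_num
      _ ≤ _ := Real.rpow_le_rpow_of_exponent_le (by norm_num) (by linarith)
  have h3 := psi_pos q z
  unfold psi at *
  nlinarith

lemma tele_step {α t v : ℝ} (hα : 0 < α) (ht : 0 < t) (hv : 0 ≤ v) (hvt : v ≤ t) :
    α / (2 + α) * (v * t ^ (-1 - α)) ≤ t ^ (-α) - (t + v) ^ (-α) := by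
  set τ := v / t with hτ
  have hτ0 : 0 ≤ τ := by positivity
  have hτ1 : τ ≤ 1 := (div_le_one ht).2 hvt
  have h1 : t + v = t * (1 + τ) := by rw [hτ]; field_simp
  have h2 : t ^ (-1 - α) = t ^ (-α) / t := by
    rw [← Real.rpow_sub_one ht.ne']; congr 1; ring
  rw [h1, Real.mul_rpow ht.le (by linarith), h2]
  have h3 : v * (t ^ (-α) / t) = t ^ (-α) * τ := by rw [hτ]; ring
  rw [h3]
  have hlog : τ / 2 ≤ Real.log (1 + τ) := by
    have := Real.one_sub_inv_le_log_of_pos (x := 1 + τ) (by linarith)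
    refine le_trans ?_ this
    have : 1 - (1 + τ)⁻¹ = τ / (1 + τ) := by field_simp; ring
    rw [this]; gcongr; linarith
  have h4 : (1 + τ) ^ (-α) ≤ 1 - α / (2 + α) * τ := by
    rw [Real.rpow_def_of_pos (by linarith)]
    set y := α * τ / 2 with hy
    have hy0 : 0 ≤ y := by positivity
    have hyα : y ≤ α / 2 := by rw [hy]; nlinarith
    calc Real.exp (Real.log (1 + τ) * -α) ≤ Real.exp (-y) := by
          apply Real.exp_le_exp.2; rw [hy]; nlinarith
      _ ≤ 1 / (1 + y) := by
          rw [Real.exp_neg, ← one_div]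
          gcongr
          linarith [Real.add_one_le_exp y]
      _ = 1 - y / (1 + y) := by field_simp; ring
      _ ≤ 1 - y / (1 + α / 2) := by gcongr
      _ = _ := by rw [hy]; field_simp
  have h5 : 0 < t ^ (-α) := Real.rpow_pos_of_pos ht _
  nlinarith

lemma tele_sum {α : ℝ} (hα : 0 < α) (t v : ℕ → ℝ) (n : ℕ) (ht : ∀ i, 0 < t i)
    (hv : ∀ i, 0 ≤ v i) (hvt : ∀ i, v i ≤ t (i + 1)) (hs : ∀ i, t i = t (i + 1) + v i) :
    ∑ i ∈ range n, v i * t (i + 1) ^ (-1 - α) ≤ (2 + α) / α * t n ^ (-α) := by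
  have h : ∑ i ∈ range n, α / (2 + α) * (v i * t (i + 1) ^ (-1 - α))
      ≤ ∑ i ∈ range n, (t (i + 1) ^ (-α) - t i ^ (-α)) := by
    refine Finset.sum_le_sum fun i _ => ?_
    have := tele_step hα (ht (i + 1)) (hv i) (hvt i)
    rwa [← hs i] at this
  rw [Finset.sum_range_sub (fun i => t i ^ (-α)), ← Finset.mul_sum] at h
  have h0 : 0 < t 0 ^ (-α) := Real.rpow_pos_of_pos (ht 0) _
  have hc : 0 < α / (2 + α) := by positivity
  calc _ = (2 + α) / α * (α / (2 + α) * ∑ i ∈ range n, v i * t (i + 1) ^ (-1 - α)) := by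
        field_simp
    _ ≤ (2 + α) / α * t n ^ (-α) := by gcongr; linarith

lemma kernel_bound {Ω : Type*} [MeasurableSpace Ω] (μ : Measure Ω) [IsProbabilityMeasure μ]
    (S : Ω → ℝ) (hS : Measurable S) {q γ D : ℝ} (hq : 1 / 2 < q) (hγ : 0 < γ)
    (hD : ∀ x, |μ.real {ω | S ω ≤ x} - stdNormalCDF x| ≤ D) (x : ℝ) :
    ∫ ω, psi q ((x - S ω) / γ) ∂μ ≤ (2 / (1 - 1 / (2 * q))) * γ + 2 * D := by
  have hq0 : 0 < q := by linarith
  have hm : Measurable (fun ω => psi q ((x - S ω) / γ)) :=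
    (psi_continuous q).measurable.comp ((measurable_const.sub hS).div_const γ)
  have hint : Integrable (fun ω => psi q ((x - S ω) / γ)) μ := by
    refine Integrable.of_bound hm.aestronglyMeasurable 1 (Eventually.of_forall fun ω => ?_)
    rw [Real.norm_eq_abs, abs_of_pos (psi_pos _ _)]; exact psi_le_one hq0 _
  rw [hint.integral_eq_integral_meas_lt (Eventually.of_forall fun ω => (psi_pos _ _).le)]
  have hsub : ∫ t in Set.Ioi (0:ℝ), μ.real {a | t < psi q ((x - S a) / γ)}
      = ∫ t in Set.Ioc (0:ℝ) 1, μ.real {a | t < psi q ((x - S a) / γ)} := by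
    refine setIntegral_eq_of_subset_of_forall_sdiff_eq_zero measurableSet_Ioi
      (fun t ht => ht.1) fun t ht => ?_
    have : 1 < t := by
      by_contra h
      exact ht.2 ⟨ht.1, not_lt.1 h⟩
    have he : {a | t < psi q ((x - S a) / γ)} = ∅ := by
      ext a; simp only [Set.mem_ofPred_eq, Set.mem_empty_iff_false, iff_false, not_lt]
      exact (psi_le_one hq0 _).trans this.le
    simp [he]
  rw [hsub]
  have hr : -1 < -(1 / (2 * q)) := by
    have : 1 / (2 * q) < 1 := by rw [div_lt_one (by linarith)]; linarith
    linarith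
  have hpt : ∀ t ∈ Set.Ioc (0:ℝ) 1, μ.real {a | t < psi q ((x - S a) / γ)}
      ≤ 2 * γ * t ^ (-(1 / (2 * q))) + 2 * D := by
    intro t ht
    set ρ := γ * t ^ (-(1 / (2 * q))) with hρ
    have hρ0 : 0 < ρ := mul_pos hγ (Real.rpow_pos_of_pos ht.1 _)
    have hsub : {a | t < psi q ((x - S a) / γ)} ⊆ {a | S a ≤ x + ρ} \ {a | S a ≤ x - ρ} := by
      intro a ha
      simp only [Set.mem_ofPred_eq] at ha
      have habs : |(x - S a) / γ| < t ^ (-(1 / (2 * q))) := by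
        set y := (x - S a) / γ
        by_contra hcon
        push Not at hcon
        have h1 : (t ^ (-(1 / (2 * q)))) ^ 2 ≤ 1 + y ^ 2 := by
          rw [← sq_abs y]
          have := pow_le_pow_left₀ (Real.rpow_nonneg ht.1.le _) hcon 2
          linarith
        have h2 : psi q y ≤ ((t ^ (-(1 / (2 * q)))) ^ 2) ^ (-q) :=
          Real.rpow_le_rpow_of_nonpos (by have := Real.rpow_pos_of_pos ht.1 (-(1 / (2 * q))); positivity)
            h1 (by linarith)
        have h3 : ((t ^ (-(1 / (2 * q)))) ^ 2) ^ (-q) = t := by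
          rw [← Real.rpow_natCast, ← Real.rpow_mul ht.1.le, ← Real.rpow_mul ht.1.le]
          have : -(1 / (2 * q)) * ((2 : ℕ) : ℝ) * -q = 1 := by push_cast; field_simp
          rw [this, Real.rpow_one]
        linarith
      rw [abs_div, abs_of_pos hγ, div_lt_iff₀ hγ, abs_lt] at habs
      simp only [Set.mem_sdiff, Set.mem_ofPred_eq, not_le]
      rw [hρ]
      constructor <;> linarith [habs.1, habs.2]
    have hle : μ.real {a | t < psi q ((x - S a) / γ)}
        ≤ μ.real {a | S a ≤ x + ρ} - μ.real {a | S a ≤ x - ρ} := by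
      refine (measureReal_mono hsub).trans (le_of_eq ?_)
      refine measureReal_sdiff (fun a ha => ?_) (measurableSet_le hS measurable_const)
      simp only [Set.mem_ofPred_eq] at *
      linarith
    have h1 := abs_le.1 (hD (x + ρ))
    have h2 := abs_le.1 (hD (x - ρ))
    have h3 := le_of_abs_le (cdf_lip (x - ρ) (x + ρ))
    rw [abs_of_nonneg (by linarith)] at h3
    have h4 : 2 * γ * t ^ (-(1 / (2 * q))) = 2 * ρ := by rw [hρ]; ring
    rw [h4]
    linarith [h1.1, h1.2, h2.1, h2.2]
  have hii : IntervalIntegrable (fun t : ℝ => t ^ (-(1 / (2 * q)))) volume 0 1 :=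
    intervalIntegral.intervalIntegrable_rpow' hr
  have hio : IntegrableOn (fun t : ℝ => 2 * γ * t ^ (-(1 / (2 * q))) + 2 * D) (Set.Ioc 0 1) := by
    have h1 : IntegrableOn (fun t : ℝ => t ^ (-(1 / (2 * q)))) (Set.Ioc 0 1) :=
      (intervalIntegrable_iff_integrableOn_Ioc_of_le zero_le_one).1 hii
    exact (h1.const_mul _).add (integrableOn_const (by simp))
  calc ∫ t in Set.Ioc (0:ℝ) 1, μ.real {a | t < psi q ((x - S a) / γ)}
      ≤ ∫ t in Set.Ioc (0:ℝ) 1, (2 * γ * t ^ (-(1 / (2 * q))) + 2 * D) := by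
        refine integral_mono_of_nonneg (Eventually.of_forall fun t => measureReal_nonneg) hio ?_
        exact (ae_restrict_iff' measurableSet_Ioc).2 (Eventually.of_forall hpt)
    _ = ∫ t in (0:ℝ)..1, (2 * γ * t ^ (-(1 / (2 * q))) + 2 * D) :=
        (intervalIntegral.integral_of_le zero_le_one).symm
    _ = _ := by
        rw [intervalIntegral.integral_add (hii.const_mul _) (by simp), intervalIntegral.integral_const_mul,
          integral_rpow (Or.inl hr)]
        have h5 : -(1 / (2 * q)) + 1 ≠ 0 := by linarith
        have h6 : 1 - 1 / (2 * q) ≠ 0 := by linarith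
        rw [Real.one_rpow, Real.zero_rpow h5]
        have h7 : -(1 / (2 * q)) + 1 = 1 - 1 / (2 * q) := by ring
        rw [h7]
        simp only [intervalIntegral.integral_const, smul_eq_mul]
        ring


/-- Deterministic one step estimate. -/
lemma inc_step {p q ε γ t v : ℝ} (hp : 1 < p) (hq1 : q ≤ 1) (hε : 0 < ε) (hε1 : ε ≤ 1) (hγ : 0 < γ)
    (ht : γ ^ 2 ≤ t) (hv : 0 ≤ v) (hvt : v ≤ t) (y Y : ℝ) :
    |stdNormalCDF ((y - Y) / Real.sqrt t) - stdNormalCDF (y / Real.sqrt (t + v))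
      + phi (y / Real.sqrt t) / Real.sqrt t * Y
      + (y / Real.sqrt t) * phi (y / Real.sqrt t) / (2 * t) * (Y ^ 2 - v)|
    ≤ 648 * (ε * γ ^ (p / (p - 1)) * t ^ (-1 - p / (p - 1) / 2) * psi q (y / Real.sqrt t) * (Y ^ 2 + v)
        + ε ^ (-(2 * p - 2)) * γ ^ (-(2 * p)) * (|Y| ^ (2 * p) + v ^ p)) := by
  have ht0 : 0 < t := lt_of_lt_of_le (by positivity) ht
  have hs0 : 0 < Real.sqrt t := Real.sqrt_pos.2 ht0
  have hss : Real.sqrt t ^ 2 = t := Real.sq_sqrt ht0.le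
  set z := y / Real.sqrt t with hz
  set h := Y / Real.sqrt t with hh
  set τ := v / t with hτ
  have hτ0 : 0 ≤ τ := by positivity
  have hτ1 : τ ≤ 1 := (div_le_one ht0).2 hvt
  set β := p / (p - 1) with hβ
  have hp1 : 0 < p - 1 := by linarith
  have hβ0 : 0 < β := by positivity
  have hβp : β * (p - 1) = p := by rw [hβ]; field_simp
  set w := ε * (γ ^ 2 / t) ^ (β / 2) with hw
  have hg0 : 0 < γ ^ 2 / t := by positivity
  have hg1 : γ ^ 2 / t ≤ 1 := (div_le_one ht0).2 ht
  have hw0 : 0 < w := by positivity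
  have hw1 : w ≤ 1 := by
    have := Real.rpow_le_one hg0.le hg1 (by positivity : 0 ≤ β / 2)
    have h0 : 0 ≤ (γ ^ 2 / t) ^ (β / 2) := by positivity
    rw [hw]; nlinarith
  have e1 : (y - Y) / Real.sqrt t = z - h := by rw [hz, hh]; ring
  have e2 : y / Real.sqrt (t + v) = z / Real.sqrt (1 + τ) := by
    have : t + v = t * (1 + τ) := by rw [hτ]; field_simp
    rw [this, Real.sqrt_mul ht0.le, hz, div_div]
  have b1 := taylor_main hp hq1 hw0 hw1 z h
  have b2 := scale_main hp hq1 hw0 hw1 z τ hτ0 hτ1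
  have e3 : stdNormalCDF ((y - Y) / Real.sqrt t) - stdNormalCDF (y / Real.sqrt (t + v))
      + phi z / Real.sqrt t * Y + z * phi z / (2 * t) * (Y ^ 2 - v)
      = (stdNormalCDF (z - h) - stdNormalCDF z + phi z * h + z * phi z / 2 * h ^ 2)
       - (stdNormalCDF (z / Real.sqrt (1 + τ)) - stdNormalCDF z + z * phi z / 2 * τ) := by
    rw [e1, e2]
    have : h ^ 2 = Y ^ 2 / t := by rw [hh, div_pow, hss]
    rw [this, hτ, hh]
    field_simp
    ring
  rw [e3]
  refine (abs_sub _ _).trans ((add_le_add b1 b2).trans (le_of_eq ?_))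
  have e4 : w * h ^ 2 = ε * γ ^ β * t ^ (-1 - β / 2) * Y ^ 2 := by
    have : h ^ 2 = Y ^ 2 / t := by rw [hh, div_pow, hss]
    rw [this, hw, Real.div_rpow (by positivity) ht0.le, ← Real.rpow_natCast, ← Real.rpow_mul hγ.le]
    have : ((2 : ℕ) : ℝ) * (β / 2) = β := by push_cast; ring
    rw [this, show (-1 - β / 2 : ℝ) = -(β / 2) - 1 by ring, Real.rpow_sub_one ht0.ne',
      Real.rpow_neg ht0.le]
    have : t ^ (β / 2) ≠ 0 := by positivity
    field_simp
  have e5 : w * τ = ε * γ ^ β * t ^ (-1 - β / 2) * v := by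
    rw [hτ, hw, Real.div_rpow (by positivity) ht0.le, ← Real.rpow_natCast, ← Real.rpow_mul hγ.le]
    have : ((2 : ℕ) : ℝ) * (β / 2) = β := by push_cast; ring
    rw [this, show (-1 - β / 2 : ℝ) = -(β / 2) - 1 by ring, Real.rpow_sub_one ht0.ne',
      Real.rpow_neg ht0.le]
    have : t ^ (β / 2) ≠ 0 := by positivity
    field_simp
  have e6 : w ^ (-(2 * p - 2)) = ε ^ (-(2 * p - 2)) * γ ^ (-(2 * p)) * t ^ p := by
    rw [hw, Real.mul_rpow hε.le (by positivity), ← Real.rpow_mul hg0.le,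
      show β / 2 * -(2 * p - 2) = -(β * (p - 1)) by ring, hβp, Real.div_rpow (by positivity) ht0.le,
      ← Real.rpow_natCast, ← Real.rpow_mul hγ.le, Real.rpow_neg ht0.le,
      show ((2 : ℕ) : ℝ) * -p = -(2 * p) by push_cast; ring]
    field_simp
  have e7 : |h| ^ (2 * p) = |Y| ^ (2 * p) / t ^ p := by
    rw [hh, abs_div, abs_of_pos hs0, Real.div_rpow (abs_nonneg _) hs0.le,
      Real.rpow_mul hs0.le, Real.rpow_two, hss]
  have e8 : τ ^ p = v ^ p / t ^ p := by rw [hτ, Real.div_rpow hv ht0.le]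
  have : t ^ p ≠ 0 := by positivity
  rw [e4, e5, e6, e7, e8]
  field_simp
  ring

/-- Weak formulation of (truncated) martingale differences `Y i`, with conditional variances `v i`. -/
structure MD {Ω : Type*} [mΩ : MeasurableSpace Ω] (μ : Measure Ω) (ℱ : Filtration ℕ mΩ)
    (p γ : ℝ) (Y v : ℕ → Ω → ℝ) : Prop where
  mY : ∀ i, Measurable[ℱ (i + 1)] (Y i)
  mv : ∀ i, Measurable[ℱ i] (v i)
  v0 : ∀ i ω, 0 ≤ v i ω
  vγ : ∀ i ω, v i ω ≤ γ ^ 2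
  V1 : ∀ n ω, ∑ i ∈ range n, v i ω ≤ 1 + γ ^ 2
  iY : ∀ i, Integrable (fun ω => |Y i ω| ^ (2 * p)) μ
  h1 : ∀ i (ξ : Ω → ℝ), Measurable[ℱ i] ξ → Integrable (fun ω => ξ ω * Y i ω) μ →
    ∫ ω, ξ ω * Y i ω ∂μ = 0
  h2 : ∀ i (ξ : Ω → ℝ), Measurable[ℱ i] ξ → (∃ B, ∀ ω, |ξ ω| ≤ B) →
    ∫ ω, ξ ω * Y i ω ^ 2 ∂μ = ∫ ω, ξ ω * v i ω ∂μ

lemma bdd_integrable {Ω : Type*} [MeasurableSpace Ω] {μ : Measure Ω} [IsProbabilityMeasure μ]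
    {f : Ω → ℝ} (hf : Measurable f) {B : ℝ} (hB : ∀ ω, |f ω| ≤ B) : Integrable f μ :=
  Integrable.of_bound hf.aestronglyMeasurable B (Eventually.of_forall hB)

lemma bdd_mul_integrable {Ω : Type*} [MeasurableSpace Ω] {μ : Measure Ω}
    {f g : Ω → ℝ} (hf : Measurable f) {B : ℝ} (hB : ∀ ω, |f ω| ≤ B) (hg : Integrable g μ) :
    Integrable (fun ω => f ω * g ω) μ :=
  hg.bdd_mul hf.aestronglyMeasurable (Eventually.of_forall hB)

namespace MD

variable {Ω : Type*} [mΩ : MeasurableSpace Ω] {μ : Measure Ω} [IsProbabilityMeasure μ]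
  {ℱ : Filtration ℕ mΩ} {p γ : ℝ} {Y v : ℕ → Ω → ℝ}

lemma mY' (H : MD μ ℱ p γ Y v) (i : ℕ) : Measurable (Y i) := (H.mY i).mono (ℱ.le _) le_rfl
lemma mv' (H : MD μ ℱ p γ Y v) (i : ℕ) : Measurable (v i) := (H.mv i).mono (ℱ.le _) le_rfl

lemma mS (H : MD μ ℱ p γ Y v) (k : ℕ) : Measurable[ℱ k] (fun ω => ∑ i ∈ range k, Y i ω) :=
  Finset.measurable_sum _ fun i hi =>
    (H.mY i).mono (ℱ.mono (by have := mem_range.1 hi; omega)) le_rfl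

lemma mS' (H : MD μ ℱ p γ Y v) (k : ℕ) : Measurable (fun ω => ∑ i ∈ range k, Y i ω) :=
  (H.mS k).mono (ℱ.le _) le_rfl

lemma mV (H : MD μ ℱ p γ Y v) (k : ℕ) : Measurable[ℱ k] (fun ω => ∑ i ∈ range (k + 1), v i ω) :=
  Finset.measurable_sum _ fun i hi =>
    (H.mv i).mono (ℱ.mono (by have := mem_range.1 hi; omega)) le_rfl

lemma mV' (H : MD μ ℱ p γ Y v) (k : ℕ) : Measurable (fun ω => ∑ i ∈ range k, v i ω) :=
  Finset.measurable_sum _ fun i _ => H.mv' i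

lemma sqY (H : MD μ ℱ p γ Y v) (hp : 1 < p) (i : ℕ) : MemLp (Y i) 2 μ := by
  rw [memLp_two_iff_integrable_sq (H.mY' i).aestronglyMeasurable]
  refine ((integrable_const (1:ℝ)).add (H.iY i)).mono' ((H.mY' i).pow_const 2).aestronglyMeasurable
    (Eventually.of_forall fun ω => ?_)
  simp only [Pi.add_apply, Real.norm_eq_abs]
  rw [abs_of_nonneg (sq_nonneg _), ← sq_abs]
  rcases le_total |Y i ω| 1 with h | h
  · have : 0 ≤ |Y i ω| ^ (2 * p) := by positivity
    nlinarith [abs_nonneg (Y i ω)]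
  · have : |Y i ω| ^ (2:ℝ) ≤ |Y i ω| ^ (2 * p) := Real.rpow_le_rpow_of_exponent_le h (by linarith)
    rw [Real.rpow_two] at this
    linarith

lemma sqD (H : MD μ ℱ p γ Y v) (hp : 1 < p) (k m : ℕ) :
    MemLp (fun ω => ∑ i ∈ range m, Y i ω - ∑ i ∈ range k, Y i ω) 2 μ :=
  (memLp_finsetSum _ fun i _ => H.sqY hp i).sub (memLp_finsetSum _ fun i _ => H.sqY hp i)

lemma iS2 (H : MD μ ℱ p γ Y v) (hp : 1 < p) (i : ℕ) : Integrable (fun ω => Y i ω ^ 2) μ :=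
  (memLp_two_iff_integrable_sq (H.mY' i).aestronglyMeasurable).1 (H.sqY hp i)

lemma iS1 (H : MD μ ℱ p γ Y v) (hp : 1 < p) (i : ℕ) : Integrable (Y i) μ :=
  (H.sqY hp i).integrable (by norm_num)

lemma iv (H : MD μ ℱ p γ Y v) (i : ℕ) : Integrable (v i) μ :=
  bdd_integrable (H.mv' i) (B := γ ^ 2) fun ω => by
    rw [abs_of_nonneg (H.v0 i ω)]; exact H.vγ i ω

lemma lin (H : MD μ ℱ p γ Y v) (hp : 1 < p) {k m : ℕ} (hkm : k ≤ m) (ξ : Ω → ℝ)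
    (hξ : Measurable[ℱ k] ξ) {B : ℝ} (hB : ∀ ω, |ξ ω| ≤ B) :
    ∫ ω, ξ ω * (∑ i ∈ range m, Y i ω - ∑ i ∈ range k, Y i ω) ∂μ = 0 := by
  have hξ' : Measurable ξ := hξ.mono (ℱ.le _) le_rfl
  induction m, hkm using Nat.le_induction with
  | base => simp
  | succ m hkm ih =>
    have e : ∀ ω, ξ ω * (∑ i ∈ range (m + 1), Y i ω - ∑ i ∈ range k, Y i ω)
        = ξ ω * (∑ i ∈ range m, Y i ω - ∑ i ∈ range k, Y i ω) + ξ ω * Y m ω := fun ω => by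
      rw [Finset.sum_range_succ]; ring
    simp_rw [e]
    have i2 := bdd_mul_integrable hξ' hB (H.iS1 hp m)
    rw [integral_add (bdd_mul_integrable hξ' hB ((H.sqD hp k m).integrable (by norm_num))) i2, ih,
      H.h1 m ξ (hξ.mono (ℱ.mono hkm) le_rfl) i2, add_zero]

lemma var (H : MD μ ℱ p γ Y v) (hp : 1 < p) {k m : ℕ} (hkm : k ≤ m) (ξ : Ω → ℝ)
    (hξ : Measurable[ℱ k] ξ) {B : ℝ} (hB : ∀ ω, |ξ ω| ≤ B) :
    ∫ ω, ξ ω * (∑ i ∈ range m, Y i ω - ∑ i ∈ range k, Y i ω) ^ 2 ∂μ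
      = ∫ ω, ξ ω * (∑ i ∈ range m, v i ω - ∑ i ∈ range k, v i ω) ∂μ := by
  have hξ' : Measurable ξ := hξ.mono (ℱ.le _) le_rfl
  induction m, hkm using Nat.le_induction with
  | base => simp
  | succ m hkm ih =>
    have e : ∀ ω, ξ ω * (∑ i ∈ range (m + 1), Y i ω - ∑ i ∈ range k, Y i ω) ^ 2
        = ξ ω * (∑ i ∈ range m, Y i ω - ∑ i ∈ range k, Y i ω) ^ 2
          + (2 * ((ξ ω * (∑ i ∈ range m, Y i ω - ∑ i ∈ range k, Y i ω)) * Y m ω)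
          + ξ ω * Y m ω ^ 2) := fun ω => by
      rw [Finset.sum_range_succ]; ring
    have e' : ∀ ω, ξ ω * (∑ i ∈ range (m + 1), v i ω - ∑ i ∈ range k, v i ω)
        = ξ ω * (∑ i ∈ range m, v i ω - ∑ i ∈ range k, v i ω) + ξ ω * v m ω := fun ω => by
      rw [Finset.sum_range_succ]; ring
    simp_rw [e, e']
    have i1 : Integrable (fun ω => ξ ω * (∑ i ∈ range m, Y i ω - ∑ i ∈ range k, Y i ω) ^ 2) μ :=
      bdd_mul_integrable hξ' hB (H.sqD hp k m).integrable_sq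
    have i2 : Integrable (fun ω => (ξ ω * (∑ i ∈ range m, Y i ω - ∑ i ∈ range k, Y i ω)) * Y m ω) μ := by
      have := bdd_mul_integrable hξ' hB ((H.sqD hp k m).integrable_mul (H.sqY hp m))
      refine this.congr (Eventually.of_forall fun ω => ?_)
      simp only [Pi.mul_apply]; ring
    have i3 := bdd_mul_integrable hξ' hB (H.iS2 hp m)
    have i4 := bdd_mul_integrable hξ' hB (H.iv m)
    have i5 : Integrable (fun ω => ξ ω * (∑ i ∈ range m, v i ω - ∑ i ∈ range k, v i ω)) μ :=
      bdd_mul_integrable hξ' hB ((integrable_finsetSum _ fun i _ => H.iv i).sub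
        (integrable_finsetSum _ fun i _ => H.iv i))
    have z : ∫ ω, (ξ ω * (∑ i ∈ range m, Y i ω - ∑ i ∈ range k, Y i ω)) * Y m ω ∂μ = 0 := by
      refine H.h1 m _ ?_ i2
      exact (hξ.mono (ℱ.mono hkm) le_rfl).mul ((H.mS m).sub ((H.mS k).mono (ℱ.mono hkm) le_rfl))
    have i23 : Integrable (fun ω => 2 * ((ξ ω * (∑ i ∈ range m, Y i ω - ∑ i ∈ range k, Y i ω)) * Y m ω)
          + ξ ω * Y m ω ^ 2) μ := (i2.const_mul 2).add i3
    rw [integral_add i1 i23, integral_add (i2.const_mul 2) i3,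
      integral_const_mul, z, ih, integral_add i5 i4, H.h2 m ξ (hξ.mono (ℱ.mono hkm) le_rfl) ⟨B, hB⟩]
    ring

lemma vp (H : MD μ ℱ p γ Y v) (hp : 1 < p) (i : ℕ) :
    Integrable (fun ω => v i ω ^ p) μ ∧ ∫ ω, v i ω ^ p ∂μ ≤ ∫ ω, |Y i ω| ^ (2 * p) ∂μ := by
  have hp0 : 0 < p := by linarith
  have hvp : Integrable (fun ω => v i ω ^ p) μ :=
    bdd_integrable ((H.mv' i).pow_const p) (B := (γ ^ 2) ^ p) fun ω => by
      rw [abs_of_nonneg (Real.rpow_nonneg (H.v0 i ω) _)]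
      exact Real.rpow_le_rpow (H.v0 i ω) (H.vγ i ω) hp0.le
  refine ⟨hvp, ?_⟩
  have hB : ∀ ω, |v i ω ^ (p - 1)| ≤ (γ ^ 2) ^ (p - 1) := fun ω => by
    rw [abs_of_nonneg (Real.rpow_nonneg (H.v0 i ω) _)]
    exact Real.rpow_le_rpow (H.v0 i ω) (H.vγ i ω) (by linarith)
  have h := H.h2 i (fun ω => v i ω ^ (p - 1)) ((H.mv i).pow_const _) ⟨_, hB⟩
  have e : ∀ ω, v i ω ^ (p - 1) * v i ω = v i ω ^ p := fun ω => by
    rcases (H.v0 i ω).eq_or_lt with h0 | h0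
    · rw [← h0, Real.zero_rpow hp0.ne', mul_zero]
    · rw [Real.rpow_sub_one h0.ne']; field_simp
  simp_rw [e] at h
  have hm : ∫ ω, v i ω ^ (p - 1) * Y i ω ^ 2 ∂μ
      ≤ ∫ ω, ((1 - 1 / p) * v i ω ^ p + 1 / p * |Y i ω| ^ (2 * p)) ∂μ := by
    refine integral_mono (bdd_mul_integrable ((H.mv' i).pow_const _) hB (H.iS2 hp i))
      ((hvp.const_mul _).add ((H.iY i).const_mul _)) fun ω => ?_
    have hv := H.v0 i ω
    have := Real.geom_mean_le_arith_mean2_weighted (w₁ := 1 - 1 / p) (w₂ := 1 / p)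
      (p₁ := v i ω ^ p) (p₂ := |Y i ω| ^ (2 * p))
      (by rw [sub_nonneg, div_le_one hp0]; exact hp.le) (by positivity) (by positivity) (by positivity) (by ring)
    rw [← Real.rpow_mul hv, ← Real.rpow_mul (abs_nonneg _)] at this
    have e1 : p * (1 - 1 / p) = p - 1 := by field_simp
    have e2 : 2 * p * (1 / p) = 2 := by field_simp
    rw [e1, e2, Real.rpow_two, sq_abs] at this
    exact this
  rw [h, integral_add (hvp.const_mul _) ((H.iY i).const_mul _), integral_const_mul, integral_const_mul] at hm
  have hpi : 0 < 1 / p := by positivity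
  nlinarith

lemma jensen (H : MD μ ℱ p γ Y v) (hp : 1 < p) (hγ : 0 < γ) {q : ℝ} (hq : 0 < q) (hq1 : q ≤ 1)
    {k m : ℕ} (hkm : k ≤ m) (ξ t : Ω → ℝ) (hξ : Measurable[ℱ k] ξ) (ht : Measurable[ℱ k] t)
    {B : ℝ} (hB : ∀ ω, |ξ ω| ≤ B) (hξ0 : ∀ ω, 0 ≤ ξ ω) (htγ : ∀ ω, γ ^ 2 ≤ t ω)
    (htV : ∀ ω, ∑ i ∈ range m, v i ω - ∑ i ∈ range k, v i ω ≤ t ω) (x : ℝ) :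
    ∫ ω, ξ ω * psi q ((x - ∑ i ∈ range k, Y i ω) / Real.sqrt (t ω)) ∂μ
      ≤ 2 * ∫ ω, ξ ω * psi q ((x - ∑ i ∈ range m, Y i ω) / Real.sqrt (t ω)) ∂μ := by
  have hξ' : Measurable ξ := hξ.mono (ℱ.le _) le_rfl
  have ht' : Measurable t := ht.mono (ℱ.le _) le_rfl
  have ht0 : ∀ ω, 0 < t ω := fun ω => lt_of_lt_of_le (by positivity) (htγ ω)
  have hs0 : ∀ ω, γ ≤ Real.sqrt (t ω) := fun ω => Real.le_sqrt_of_sq_le (htγ ω)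
  set z : Ω → ℝ := fun ω => (x - ∑ i ∈ range k, Y i ω) / Real.sqrt (t ω) with hz
  set d : Ω → ℝ := fun ω => ∑ i ∈ range m, Y i ω - ∑ i ∈ range k, Y i ω with hd
  have mz : Measurable[ℱ k] z := ((H.mS k).const_sub x).div (Real.continuous_sqrt.measurable.comp ht)
  set A : Ω → ℝ := fun ω => (2 + z ω ^ 2) ^ (-q) with hA
  set C : Ω → ℝ := fun ω => (2 + z ω ^ 2) ^ (-q - 1) with hC
  have mA : Measurable[ℱ k] A := ((mz.pow_const 2).const_add 2).pow_const _
  have mC : Measurable[ℱ k] C := ((mz.pow_const 2).const_add 2).pow_const _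
  have hA0 : ∀ ω, 0 < A ω := fun ω => Real.rpow_pos_of_pos (by positivity) _
  have hC0 : ∀ ω, 0 < C ω := fun ω => Real.rpow_pos_of_pos (by positivity) _
  have hA1 : ∀ ω, A ω ≤ 1 := fun ω =>
    Real.rpow_le_one_of_one_le_of_nonpos (by nlinarith [sq_nonneg (z ω)]) (by linarith)
  have hC1 : ∀ ω, C ω ≤ 1 / (2 + z ω ^ 2) := fun ω => by
    have : (1:ℝ) / (2 + z ω ^ 2) = (2 + z ω ^ 2) ^ (-1 : ℝ) := by
      rw [Real.rpow_neg (by positivity), Real.rpow_one, one_div]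
    rw [this]
    exact Real.rpow_le_rpow_of_exponent_le (by nlinarith [sq_nonneg (z ω)]) (by linarith)
  have hC2 : ∀ ω, C ω ≤ 1 := fun ω => (hC1 ω).trans (by
    rw [div_le_one (by positivity)]; nlinarith [sq_nonneg (z ω)])
  have hC3 : ∀ ω, |z ω| * C ω ≤ 1 := fun ω => by
    have h1 := hC1 ω
    rw [le_div_iff₀ (by positivity)] at h1
    have h2 : |z ω| ≤ 2 + z ω ^ 2 := by rw [← sq_abs]; nlinarith [sq_nonneg (|z ω| - 1)]
    nlinarith [hC0 ω]
  have hB0 : ∀ ω, ξ ω ≤ B := fun ω => (le_abs_self _).trans (hB ω)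
  -- linear weight
  set η : Ω → ℝ := fun ω => ξ ω * (C ω * z ω) / Real.sqrt (t ω) with hη
  set ζ : Ω → ℝ := fun ω => ξ ω * C ω / t ω with hζ
  have mη : Measurable[ℱ k] η := (hξ.mul (mC.mul mz)).div (Real.continuous_sqrt.measurable.comp ht)
  have mζ : Measurable[ℱ k] ζ := (hξ.mul mC).div ht
  have bη : ∀ ω, |η ω| ≤ B / γ := fun ω => by
    simp only [hη]
    have h1 : |C ω * z ω| ≤ 1 := by rw [abs_mul, abs_of_pos (hC0 ω), mul_comm]; exact hC3 ω
    have h2 : |ξ ω * (C ω * z ω)| ≤ B := by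
      rw [abs_mul]
      calc |ξ ω| * |C ω * z ω| ≤ |ξ ω| * 1 := by gcongr
        _ ≤ B := by rw [mul_one]; exact hB ω
    rw [abs_div, abs_of_nonneg (Real.sqrt_nonneg _)]
    have : 0 ≤ B := (abs_nonneg _).trans (hB ω)
    exact div_le_div₀ this h2 hγ (hs0 ω)
  have bζ : ∀ ω, |ζ ω| ≤ B / γ ^ 2 := fun ω => by
    simp only [hζ]
    have h2 : |ξ ω * C ω| ≤ B := by
      rw [abs_mul, abs_of_pos (hC0 ω)]
      calc |ξ ω| * C ω ≤ |ξ ω| * 1 := by gcongr; exact hC2 ω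
        _ ≤ B := by rw [mul_one]; exact hB ω
    rw [abs_div, abs_of_pos (ht0 ω)]
    have : 0 ≤ B := (abs_nonneg _).trans (hB ω)
    exact div_le_div₀ this h2 (by positivity) (htγ ω)
  have hζ0 : ∀ ω, 0 ≤ ζ ω := fun ω => div_nonneg (mul_nonneg (hξ0 ω) (hC0 ω).le) (ht0 ω).le
  have pw : ∀ ω, ξ ω * A ω + (2 * q) * (η ω * d ω) - q * (ζ ω * d ω ^ 2) + q * (ξ ω * C ω)
      ≤ ξ ω * psi q ((x - ∑ i ∈ range m, Y i ω) / Real.sqrt (t ω)) := fun ω => by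
    have hj := psi_jensen hq (z ω) (-(d ω / Real.sqrt (t ω)))
    have e : (x - ∑ i ∈ range m, Y i ω) / Real.sqrt (t ω) = z ω + -(d ω / Real.sqrt (t ω)) := by
      simp only [hz, hd]; ring
    rw [e]
    refine le_trans (le_of_eq ?_) (mul_le_mul_of_nonneg_left hj (hξ0 ω))
    have hss : Real.sqrt (t ω) ^ 2 = t ω := Real.sq_sqrt (ht0 ω).le
    have hA' : (2 + z ω ^ 2) ^ (-q) = A ω := rfl
    have hC' : (2 + z ω ^ 2) ^ (-q - 1) = C ω := rfl
    rw [hA', hC', neg_sq, div_pow, hss]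
    simp only [hη, hζ]
    ring
  have mη' : Measurable η := mη.mono (ℱ.le _) le_rfl
  have mζ' : Measurable ζ := mζ.mono (ℱ.le _) le_rfl
  have mA' : Measurable A := mA.mono (ℱ.le _) le_rfl
  have mC' : Measurable C := mC.mono (ℱ.le _) le_rfl
  have iψ : ∀ j, Integrable (fun ω => ξ ω * psi q ((x - ∑ i ∈ range j, Y i ω) / Real.sqrt (t ω))) μ :=
    fun j => bdd_mul_integrable hξ' hB (bdd_integrable (B := 1)
      ((psi_continuous q).measurable.comp (((H.mS' j).const_sub x).div (Real.continuous_sqrt.measurable.comp ht')))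
      fun ω => by rw [abs_of_pos (psi_pos _ _)]; exact psi_le_one hq _)
  have iA : Integrable (fun ω => ξ ω * A ω) μ := bdd_mul_integrable hξ' hB (bdd_integrable (B := 1) mA'
    fun ω => by rw [abs_of_pos (hA0 ω)]; exact hA1 ω)
  have iC : Integrable (fun ω => ξ ω * C ω) μ := bdd_mul_integrable hξ' hB (bdd_integrable (B := 1) mC'
    fun ω => by rw [abs_of_pos (hC0 ω)]; exact hC2 ω)
  have i1 : Integrable (fun ω => η ω * d ω) μ :=
    bdd_mul_integrable mη' bη ((H.sqD hp k m).integrable (by norm_num))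
  have i2 : Integrable (fun ω => ζ ω * d ω ^ 2) μ :=
    bdd_mul_integrable mζ' bζ (H.sqD hp k m).integrable_sq
  have i3 : Integrable (fun ω => ζ ω * (∑ i ∈ range m, v i ω - ∑ i ∈ range k, v i ω)) μ :=
      bdd_mul_integrable mζ' bζ ((integrable_finsetSum _ fun i _ => H.iv i).sub
        (integrable_finsetSum _ fun i _ => H.iv i))
  have z1 : ∫ ω, η ω * d ω ∂μ = 0 := H.lin hp hkm η mη bη
  have z2 : ∫ ω, ζ ω * d ω ^ 2 ∂μ ≤ ∫ ω, ξ ω * C ω ∂μ := by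
    rw [H.var hp hkm ζ mζ bζ]
    refine integral_mono i3 iC fun ω => ?_
    calc ζ ω * (∑ i ∈ range m, v i ω - ∑ i ∈ range k, v i ω) ≤ ζ ω * t ω :=
          mul_le_mul_of_nonneg_left (htV ω) (hζ0 ω)
      _ = ξ ω * C ω := by simp only [hζ]; have := (ht0 ω).ne'; field_simp
  have key := integral_mono (((iA.add (i1.const_mul (2 * q))).sub (i2.const_mul q)).add (iC.const_mul q)) (iψ m) pw
  have key2 : ∫ ω, (ξ ω * A ω + (2 * q) * (η ω * d ω) - q * (ζ ω * d ω ^ 2) + q * (ξ ω * C ω)) ∂μ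
      = ∫ ω, ξ ω * A ω ∂μ + 2 * q * ∫ ω, η ω * d ω ∂μ - q * ∫ ω, ζ ω * d ω ^ 2 ∂μ + q * ∫ ω, ξ ω * C ω ∂μ := by
    have j1 : Integrable (fun ω => ξ ω * A ω + (2 * q) * (η ω * d ω)) μ :=
      iA.add (i1.const_mul (2 * q))
    have j2 : Integrable (fun ω => ξ ω * A ω + (2 * q) * (η ω * d ω) - q * (ζ ω * d ω ^ 2)) μ :=
      j1.sub (i2.const_mul q)
    rw [integral_add j2 (iC.const_mul q),
      integral_sub j1 (i2.const_mul q),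
      integral_add iA (i1.const_mul (2 * q)), integral_const_mul, integral_const_mul, integral_const_mul]
  have key3 : ∫ ω, ξ ω * A ω ∂μ ≤ ∫ ω, ξ ω * psi q ((x - ∑ i ∈ range m, Y i ω) / Real.sqrt (t ω)) ∂μ := by
    have : ∫ ω, (ξ ω * A ω + (2 * q) * (η ω * d ω) - q * (ζ ω * d ω ^ 2) + q * (ξ ω * C ω)) ∂μ ≤
      ∫ ω, ξ ω * psi q ((x - ∑ i ∈ range m, Y i ω) / Real.sqrt (t ω)) ∂μ := key
    rw [key2, z1] at this
    nlinarith
  have key4 : ∫ ω, ξ ω * psi q (z ω) ∂μ ≤ ∫ ω, 2 * (ξ ω * A ω) ∂μ := by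
    refine integral_mono (iψ k) (iA.const_mul 2) fun ω => ?_
    have := mul_le_mul_of_nonneg_left (psi_half hq hq1 (z ω)) (hξ0 ω)
    simp only [hA]
    linarith
  rw [integral_const_mul] at key4
  linarith

end MD


lemma psi_scale {q γ t y : ℝ} (hq : 0 < q) (hγ : 0 < γ) (ht : γ ^ 2 ≤ t) :
    psi q (y / Real.sqrt t) ≤ t ^ q * γ ^ (-(2 * q)) * psi q (y / γ) := by
  have ht0 : 0 < t := lt_of_lt_of_le (by positivity) ht
  unfold psi
  have e1 : (1 + (y / Real.sqrt t) ^ 2) ^ (-q) = t ^ q * (t + y ^ 2) ^ (-q) := by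
    rw [div_pow, Real.sq_sqrt ht0.le]
    have : 1 + y ^ 2 / t = (t + y ^ 2) / t := by field_simp
    rw [this, Real.div_rpow (by positivity) ht0.le, Real.rpow_neg ht0.le]
    field_simp
  have e2 : γ ^ (-(2 * q)) * (1 + (y / γ) ^ 2) ^ (-q) = (γ ^ 2 + y ^ 2) ^ (-q) := by
    have : γ ^ (-(2 * q)) = (γ ^ 2) ^ (-q) := by
      rw [← Real.rpow_natCast, ← Real.rpow_mul hγ.le]; push_cast; congr 1; ring
    rw [this, ← Real.mul_rpow (by positivity) (by positivity)]
    congr 1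
    field_simp
  rw [e1, mul_assoc, e2]
  have : (t + y ^ 2) ^ (-q) ≤ (γ ^ 2 + y ^ 2) ^ (-q) :=
    Real.rpow_le_rpow_of_nonpos (by positivity) (by linarith) (by linarith)
  gcongr

namespace MD

variable {Ω : Type*} [mΩ : MeasurableSpace Ω] {μ : Measure Ω} [IsProbabilityMeasure μ]
  {ℱ : Filtration ℕ mΩ} {p γ : ℝ} {Y v : ℕ → Ω → ℝ}

lemma step (H : MD μ ℱ p γ Y v) (hp : 1 < p) (hγ : 0 < γ) {q : ℝ} (hq : 0 < q) (hq1 : q ≤ 1)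
    {ε : ℝ} (hε : 0 < ε) (hε1 : ε ≤ 1) (T : ℕ → Ω → ℝ) (mT : ∀ i, Measurable[ℱ i] (T (i + 1)))
    (mT' : ∀ i, Measurable (T i))
    (hT : ∀ i ω, T i ω = T (i + 1) ω + v i ω) (hTγ : ∀ i ω, γ ^ 2 ≤ T i ω) (x : ℝ) (i : ℕ) :
    |∫ ω, stdNormalCDF ((x - ∑ j ∈ range (i + 1), Y j ω) / Real.sqrt (T (i + 1) ω)) ∂μ
      - ∫ ω, stdNormalCDF ((x - ∑ j ∈ range i, Y j ω) / Real.sqrt (T i ω)) ∂μ|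
    ≤ 648 * (2 * ε * γ ^ (p / (p - 1)) *
        ∫ ω, (T (i + 1) ω ^ (-1 - p / (p - 1) / 2) * v i ω) *
          psi q ((x - ∑ j ∈ range i, Y j ω) / Real.sqrt (T (i + 1) ω)) ∂μ
      + 2 * ε ^ (-(2 * p - 2)) * γ ^ (-(2 * p)) * ∫ ω, |Y i ω| ^ (2 * p) ∂μ) := by
  set β := p / (p - 1) with hβ
  have hp1 : 0 < p - 1 := by linarith
  have hβ0 : 0 < β := by positivity
  set z : Ω → ℝ := fun ω => (x - ∑ j ∈ range i, Y j ω) / Real.sqrt (T (i + 1) ω) with hz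
  have mz : Measurable[ℱ i] z := ((H.mS i).const_sub x).div (Real.continuous_sqrt.measurable.comp (mT i))
  have ht0 : ∀ j ω, 0 < T j ω := fun j ω => lt_of_lt_of_le (by positivity) (hTγ j ω)
  have hs0 : ∀ ω, γ ≤ Real.sqrt (T (i + 1) ω) := fun ω => Real.le_sqrt_of_sq_le (hTγ _ ω)
  set ξ1 : Ω → ℝ := fun ω => phi (z ω) / Real.sqrt (T (i + 1) ω) with hξ1
  set ξ2 : Ω → ℝ := fun ω => z ω * phi (z ω) / (2 * T (i + 1) ω) with hξ2
  set w : Ω → ℝ := fun ω => T (i + 1) ω ^ (-1 - β / 2) * psi q (z ω) with hw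
  have m1 : Measurable[ℱ i] ξ1 :=
    (continuous_phi.measurable.comp mz).div (Real.continuous_sqrt.measurable.comp (mT i))
  have m2 : Measurable[ℱ i] ξ2 :=
    (mz.mul (continuous_phi.measurable.comp mz)).div ((mT i).const_mul 2)
  have mw : Measurable[ℱ i] w :=
    ((mT i).pow_const _).mul ((psi_continuous q).measurable.comp mz)
  have b1 : ∀ ω, |ξ1 ω| ≤ 1 / γ := fun ω => by
    simp only [hξ1]
    rw [abs_div, abs_of_nonneg (phi_nonneg _), abs_of_nonneg (Real.sqrt_nonneg _)]
    exact div_le_div₀ zero_le_one (by linarith [phi_le_one (z ω)]) hγ (hs0 ω)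
  have b2 : ∀ ω, |ξ2 ω| ≤ 1 / γ ^ 2 := fun ω => by
    simp only [hξ2]
    rw [abs_div, abs_of_pos (by have := ht0 (i+1) ω; positivity : 0 < 2 * T (i + 1) ω)]
    have := abs_mul_phi (z ω)
    have := hTγ (i+1) ω
    exact div_le_div₀ zero_le_one (by linarith) (by positivity) (by nlinarith)
  have bw : ∀ ω, |w ω| ≤ (γ ^ 2) ^ (-1 - β / 2) := fun ω => by
    simp only [hw]
    have h1 : T (i + 1) ω ^ (-1 - β / 2) ≤ (γ ^ 2) ^ (-1 - β / 2) :=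
      Real.rpow_le_rpow_of_nonpos (by positivity) (hTγ _ ω) (by linarith)
    have h2 : 0 ≤ T (i + 1) ω ^ (-1 - β / 2) := Real.rpow_nonneg (ht0 _ ω).le _
    rw [abs_of_nonneg (mul_nonneg h2 (psi_pos _ _).le)]
    nlinarith [psi_le_one hq (z ω), psi_pos q (z ω)]
  have m1' : Measurable ξ1 := m1.mono (ℱ.le _) le_rfl
  have m2' : Measurable ξ2 := m2.mono (ℱ.le _) le_rfl
  have mw' : Measurable w := mw.mono (ℱ.le _) le_rfl
  set G : ℕ → Ω → ℝ := fun j ω => stdNormalCDF ((x - ∑ l ∈ range j, Y l ω) / Real.sqrt (T j ω)) with hG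
  have iG : ∀ j, Integrable (G j) μ := fun j =>
    bdd_integrable (B := 1) (cdf_continuous.measurable.comp
      (((H.mS' j).const_sub x).div (Real.continuous_sqrt.measurable.comp (mT' j))))
      fun ω => by rw [abs_of_nonneg (cdf_nonneg _)]; exact cdf_le_one _
  have i1 : Integrable (fun ω => ξ1 ω * Y i ω) μ := bdd_mul_integrable m1' b1 (H.iS1 hp i)
  have i2 : Integrable (fun ω => ξ2 ω * Y i ω ^ 2) μ := bdd_mul_integrable m2' b2 (H.iS2 hp i)
  have i3 : Integrable (fun ω => ξ2 ω * v i ω) μ := bdd_mul_integrable m2' b2 (H.iv i)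
  have i4 : Integrable (fun ω => w ω * Y i ω ^ 2) μ := bdd_mul_integrable mw' bw (H.iS2 hp i)
  have i5 : Integrable (fun ω => w ω * v i ω) μ := bdd_mul_integrable mw' bw (H.iv i)
  have z1 : ∫ ω, ξ1 ω * Y i ω ∂μ = 0 := H.h1 i ξ1 m1 i1
  have z2 : ∫ ω, ξ2 ω * Y i ω ^ 2 ∂μ = ∫ ω, ξ2 ω * v i ω ∂μ := H.h2 i ξ2 m2 ⟨_, b2⟩
  have z3 : ∫ ω, w ω * Y i ω ^ 2 ∂μ = ∫ ω, w ω * v i ω ∂μ := H.h2 i w mw ⟨_, bw⟩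
  set R : Ω → ℝ := fun ω => G (i + 1) ω - G i ω + ξ1 ω * Y i ω + (ξ2 ω * Y i ω ^ 2 - ξ2 ω * v i ω) with hR
  have iR1 : Integrable (fun ω => G (i + 1) ω - G i ω) μ := (iG _).sub (iG _)
  have iR2 : Integrable (fun ω => G (i + 1) ω - G i ω + ξ1 ω * Y i ω) μ := iR1.add i1
  have iR3 : Integrable (fun ω => ξ2 ω * Y i ω ^ 2 - ξ2 ω * v i ω) μ := i2.sub i3
  have iR : Integrable R μ := iR2.add iR3
  have eR : ∫ ω, R ω ∂μ = ∫ ω, G (i + 1) ω ∂μ - ∫ ω, G i ω ∂μ := by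
    simp only [hR]
    rw [integral_add iR2 iR3, integral_add iR1 i1, integral_sub (iG _) (iG _), integral_sub i2 i3, z1, z2]
    ring
  have iv := (H.vp hp i).1
  set a := ε * γ ^ β with ha
  set b := ε ^ (-(2 * p - 2)) * γ ^ (-(2 * p)) with hb
  set K : Ω → ℝ := fun ω => 648 * ((a * (w ω * Y i ω ^ 2) + a * (w ω * v i ω))
     + (b * |Y i ω| ^ (2 * p) + b * v i ω ^ p)) with hK
  have iK1 : Integrable (fun ω => a * (w ω * Y i ω ^ 2) + a * (w ω * v i ω)) μ :=
    (i4.const_mul a).add (i5.const_mul a)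
  have iK2 : Integrable (fun ω => b * |Y i ω| ^ (2 * p) + b * v i ω ^ p) μ :=
    ((H.iY i).const_mul b).add (iv.const_mul b)
  have iK : Integrable K μ := (iK1.add iK2).const_mul 648
  have pw : ∀ ω, |R ω| ≤ K ω := fun ω => by
    have := inc_step hp hq1 hε hε1 hγ (hTγ (i+1) ω) (H.v0 i ω) ((H.vγ i ω).trans (hTγ (i+1) ω))
      (x - ∑ j ∈ range i, Y j ω) (Y i ω)
    rw [← hT i ω, sub_sub, ← Finset.sum_range_succ] at this
    simp only [hR, hK, hG, hξ1, hξ2, hw, ha, hb]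
    refine le_trans (le_of_eq ?_) (this.trans (le_of_eq ?_))
    · congr 1; ring
    · ring
  have h1 : |∫ ω, R ω ∂μ| ≤ ∫ ω, K ω ∂μ :=
    (abs_integral_le_integral_abs).trans (integral_mono iR.abs iK pw)
  rw [eR] at h1
  refine h1.trans ?_
  simp only [hK]
  rw [integral_const_mul, integral_add iK1 iK2, integral_add (i4.const_mul a) (i5.const_mul a),
    integral_add ((H.iY i).const_mul b) (iv.const_mul b), integral_const_mul, integral_const_mul,
    integral_const_mul, integral_const_mul, z3]
  have e : ∫ ω, (T (i + 1) ω ^ (-1 - β / 2) * v i ω) * psi q (z ω) ∂μ = ∫ ω, w ω * v i ω ∂μ := by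
    congr 1; ext ω; simp only [hw]; ring
  have hb0 : 0 ≤ b := by positivity
  have := mul_le_mul_of_nonneg_left (H.vp hp i).2 hb0
  change _ ≤ 648 * (2 * ε * γ ^ β * (∫ ω, (T (i + 1) ω ^ (-1 - β / 2) * v i ω) * psi q (z ω) ∂μ) + _)
  rw [e]
  have e2 : 2 * ε * γ ^ β = 2 * a := by rw [ha]; ring
  have e3 : 2 * ε ^ (-(2 * p - 2)) * γ ^ (-(2 * p)) = 2 * b := by rw [hb]; ring
  rw [e2, e3]
  linarith

lemma core (H : MD μ ℱ p γ Y v) (hp : 1 < p) (hγ : 0 < γ) {q : ℝ} (hq : 0 < q) (hq1 : q ≤ 1)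
    {α : ℝ} (hα : 0 < α) (hαq : α = p / (p - 1) / 2 - q)
    {ε : ℝ} (hε : 0 < ε) (hε1 : ε ≤ 1) (n : ℕ)
    (hN : ∑ i ∈ range n, ∫ ω, |Y i ω| ^ (2 * p) ∂μ ≤ γ ^ (2 * p + 1)) (x : ℝ) :
    |∫ ω, stdNormalCDF ((x - ∑ j ∈ range n, Y j ω) / Real.sqrt (1 + 2 * γ ^ 2 - ∑ j ∈ range n, v j ω)) ∂μ
      - stdNormalCDF (x / Real.sqrt (1 + 2 * γ ^ 2))|
    ≤ 648 * (4 * ε * ((2 + α) / α) * ∫ ω, psi q ((x - ∑ j ∈ range n, Y j ω) / γ) ∂μ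
      + 2 * ε ^ (-(2 * p - 2)) * γ) := by
  set T : ℕ → Ω → ℝ := fun k ω => 1 + 2 * γ ^ 2 - ∑ j ∈ range k, v j ω with hTd
  have mT : ∀ i, Measurable[ℱ i] (T (i + 1)) := fun i => (H.mV i).const_sub _
  have mT' : ∀ i, Measurable (T i) := fun i => (H.mV' i).const_sub _
  have hT : ∀ i ω, T i ω = T (i + 1) ω + v i ω := fun i ω => by
    simp only [hTd, Finset.sum_range_succ]; ring
  have hTγ : ∀ i ω, γ ^ 2 ≤ T i ω := fun i ω => by
    simp only [hTd]; linarith [H.V1 i ω]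
  have ht0 : ∀ j ω, 0 < T j ω := fun j ω => lt_of_lt_of_le (by positivity) (hTγ j ω)
  set β := p / (p - 1) with hβ
  have hp1 : 0 < p - 1 := by linarith
  have hβ0 : 0 < β := by positivity
  set U : ℕ → ℝ := fun i => ∫ ω, stdNormalCDF ((x - ∑ j ∈ range i, Y j ω) / Real.sqrt (T i ω)) ∂μ with hU
  have hU0 : U 0 = stdNormalCDF (x / Real.sqrt (1 + 2 * γ ^ 2)) := by
    simp [hU, hTd]
  set J : ℕ → ℝ := fun i => ∫ ω, (T (i + 1) ω ^ (-1 - β / 2) * v i ω) *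
          psi q ((x - ∑ j ∈ range i, Y j ω) / Real.sqrt (T (i + 1) ω)) ∂μ with hJ
  set c1 := 2 * ε * γ ^ β with hc1
  set c2 := 2 * ε ^ (-(2 * p - 2)) * γ ^ (-(2 * p)) with hc2
  have hc20 : 0 ≤ c2 := by positivity
  have hc10 : 0 ≤ c1 := by positivity
  have hstep : ∀ i, |U (i + 1) - U i| ≤ 648 * (c1 * J i + c2 * ∫ ω, |Y i ω| ^ (2 * p) ∂μ) := fun i =>
    H.step hp hγ hq hq1 hε hε1 T mT mT' hT hTγ x i
  have hsum : |U n - U 0| ≤ 648 * (c1 * ∑ i ∈ range n, J i + c2 * ∑ i ∈ range n, ∫ ω, |Y i ω| ^ (2 * p) ∂μ) := by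
    rw [← Finset.sum_range_sub]
    refine (Finset.abs_sum_le_sum_abs _ _).trans ((Finset.sum_le_sum fun i _ => hstep i).trans (le_of_eq ?_))
    rw [← Finset.mul_sum, Finset.sum_add_distrib, Finset.mul_sum, Finset.mul_sum]
  -- bound on `J`
  set Ψ : Ω → ℝ := fun ω => psi q ((x - ∑ j ∈ range n, Y j ω) / γ) with hΨ
  have mΨ : Measurable Ψ := (psi_continuous q).measurable.comp (((H.mS' n).const_sub x).div_const _)
  have bΨ : ∀ ω, |Ψ ω| ≤ 1 := fun ω => by rw [abs_of_pos (psi_pos _ _)]; exact psi_le_one hq _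
  have iΨ : Integrable Ψ μ := bdd_integrable mΨ bΨ
  have bT : ∀ s : ℝ, 0 ≤ s → ∀ i ω, T i ω ^ (-s) ≤ (γ ^ 2) ^ (-s) := fun s hs i ω =>
    Real.rpow_le_rpow_of_nonpos (by positivity) (hTγ i ω) (by linarith)
  have hbound : ∀ s : ℝ, 0 ≤ s → ∀ i ω, |T (i + 1) ω ^ (-s) * v i ω| ≤ (γ ^ 2) ^ (-s) * γ ^ 2 := fun s hs i ω => by
    rw [abs_of_nonneg (mul_nonneg (Real.rpow_nonneg (ht0 _ ω).le _) (H.v0 i ω))]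
    exact mul_le_mul (bT s hs _ ω) (H.vγ i ω) (H.v0 i ω) (by positivity)
  have iterm : ∀ i, Integrable (fun ω => (v i ω * T (i + 1) ω ^ (-1 - α)) * Ψ ω) μ := fun i => by
    refine bdd_mul_integrable (B := (γ ^ 2) ^ (-(1 + α)) * γ ^ 2)
      ((H.mv' i).mul ((mT' (i+1)).pow_const _)) (fun ω => ?_) iΨ
    have := hbound (1 + α) (by linarith) i ω
    rw [mul_comm, neg_add'] at this
    rw [neg_add']
    exact this
  have hJi : ∀ i ∈ range n, J i ≤ 2 * γ ^ (-(2 * q)) * ∫ ω, (v i ω * T (i + 1) ω ^ (-1 - α)) * Ψ ω ∂μ := fun i hi => by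
    have hin := mem_range.1 hi
    have hb1 : ∀ ω, |T (i + 1) ω ^ (-1 - β / 2) * v i ω| ≤ (γ ^ 2) ^ (-1 - β / 2) * γ ^ 2 := fun ω => by
      have := hbound (1 + β / 2) (by positivity) i ω
      rwa [neg_add'] at this
    have := H.jensen hp hγ hq hq1 hin.le (fun ω => T (i + 1) ω ^ (-1 - β / 2) * v i ω) (T (i + 1))
      (((mT i).pow_const _).mul (H.mv i)) (mT i)
      (B := (γ ^ 2) ^ (-1 - β / 2) * γ ^ 2) hb1
      (fun ω => mul_nonneg (Real.rpow_nonneg (ht0 _ ω).le _) (H.v0 i ω)) (hTγ (i+1)) (fun ω => by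
        have h1 := H.V1 n ω
        have h2 := H.vγ i ω
        simp only [hTd, Finset.sum_range_succ]
        linarith) x
    refine this.trans ?_
    rw [mul_assoc, ← integral_const_mul (γ ^ (-(2 * q)))]
    refine mul_le_mul_of_nonneg_left ?_ zero_le_two
    refine integral_mono ?_ ((iterm i).const_mul _) fun ω => ?_
    · refine bdd_mul_integrable (((mT' (i+1)).pow_const _).mul (H.mv' i)) hb1 (bdd_integrable (B := 1)
        ((psi_continuous q).measurable.comp (((H.mS' n).const_sub x).div
          (Real.continuous_sqrt.measurable.comp (mT' (i+1))))) fun ω => by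
            rw [abs_of_pos (psi_pos _ _)]; exact psi_le_one hq _)
    · have h1 := psi_scale (y := x - ∑ j ∈ range n, Y j ω) hq hγ (hTγ (i+1) ω)
      have h2 := mul_le_mul_of_nonneg_left h1 (mul_nonneg (Real.rpow_nonneg (ht0 (i+1) ω).le (-1 - β / 2)) (H.v0 i ω))
      refine h2.trans (le_of_eq ?_)
      have e : T (i + 1) ω ^ (-1 - α) = T (i + 1) ω ^ (-1 - β / 2) * T (i + 1) ω ^ q := by
        rw [← Real.rpow_add (ht0 (i+1) ω), hαq]; congr 1; ring
      simp only [hΨ]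
      rw [e]; ring
  have hJs : ∑ i ∈ range n, J i ≤ 2 * γ ^ (-(2 * q)) * ((2 + α) / α * (γ ^ 2) ^ (-α) * ∫ ω, Ψ ω ∂μ) := by
    refine (Finset.sum_le_sum hJi).trans ?_
    rw [← Finset.mul_sum, ← integral_finsetSum _ fun i _ => iterm i]
    refine mul_le_mul_of_nonneg_left ?_ (by positivity)
    rw [← integral_const_mul]
    refine integral_mono (integrable_finsetSum _ fun i _ => iterm i) (iΨ.const_mul _) fun ω => ?_
    simp only
    rw [← Finset.sum_mul]
    refine mul_le_mul_of_nonneg_right ?_ (psi_pos _ _).le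
    refine (tele_sum hα (fun i => T i ω) (fun i => v i ω) n (fun i => ht0 i ω) (fun i => H.v0 i ω)
      (fun i => (H.vγ i ω).trans (hTγ (i+1) ω)) (fun i => hT i ω)).trans ?_
    exact mul_le_mul_of_nonneg_left (bT α hα.le n ω) (by positivity)
  have e1 : γ ^ β * (γ ^ (-(2 * q)) * (γ ^ 2) ^ (-α)) = 1 := by
    rw [← Real.rpow_natCast, ← Real.rpow_mul hγ.le, ← Real.rpow_add hγ, ← Real.rpow_add hγ, hαq]
    rw [show β + (-(2 * q) + ((2 : ℕ) : ℝ) * -(β / 2 - q)) = 0 by push_cast; ring, Real.rpow_zero]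
  have e2 : γ ^ (-(2 * p)) * γ ^ (2 * p + 1) = γ := by
    rw [← Real.rpow_add hγ, show -(2 * p) + (2 * p + 1) = 1 by ring, Real.rpow_one]
  have f1 := mul_le_mul_of_nonneg_left hJs hc10
  have f2 := mul_le_mul_of_nonneg_left hN hc20
  have g1 : c1 * (2 * γ ^ (-(2 * q)) * ((2 + α) / α * (γ ^ 2) ^ (-α) * ∫ ω, Ψ ω ∂μ))
     = 4 * ε * ((2 + α) / α) * ∫ ω, Ψ ω ∂μ := by
    rw [hc1]
    linear_combination (4 * ε * ((2 + α) / α) * ∫ ω, Ψ ω ∂μ) * e1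
  have g2 : c2 * γ ^ (2 * p + 1) = 2 * ε ^ (-(2 * p - 2)) * γ := by
    rw [hc2]
    linear_combination 2 * ε ^ (-(2 * p - 2)) * e2
  rw [hU0] at hsum
  refine hsum.trans ?_
  linarith

end MD


lemma unsmooth_pt {q γ T c w y : ℝ} (hq1 : q ≤ 1) (hγ : 0 < γ) (hT0 : γ ^ 2 ≤ T) (hT : T ≤ 3 * γ ^ 2)
    (hc : 0 < c) (hw : 0 ≤ w) (hy : y = (c * γ + w * γ) / Real.sqrt T) :
    0 ≤ y ∧ 700 / (1 + y ^ 2) ^ 2 ≤ 11200 / c ^ 2 * psi q w := by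
  have hT' : 0 < T := lt_of_lt_of_le (by positivity) hT0
  have hy0 : 0 ≤ y := by rw [hy]; positivity
  refine ⟨hy0, ?_⟩
  have hs : Real.sqrt T ≤ 2 * γ := by
    rw [Real.sqrt_le_left (by positivity)]; nlinarith
  have hs0 : 0 < Real.sqrt T := Real.sqrt_pos.2 hT'
  have h1 : (c + w) / 2 ≤ y := by
    rw [hy, div_le_div_iff₀ two_pos hs0]
    nlinarith
  have h2 : ((c + w) / 2) ^ 2 ≤ y ^ 2 := pow_le_pow_left₀ (by positivity) h1 2
  have h3 : c ^ 2 / 4 ≤ 1 + y ^ 2 := by nlinarith [mul_nonneg hc.le hw]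
  have h4 : (1 + w ^ 2) / 4 ≤ 1 + y ^ 2 := by nlinarith [mul_nonneg hc.le hw]
  have h5 : c ^ 2 / 4 * ((1 + w ^ 2) / 4) ≤ (1 + y ^ 2) ^ 2 := by
    rw [sq (1 + y ^ 2)]; exact mul_le_mul h3 h4 (by positivity) (by positivity)
  calc 700 / (1 + y ^ 2) ^ 2 ≤ 700 / (c ^ 2 / 4 * ((1 + w ^ 2) / 4)) := by gcongr
    _ = 11200 / c ^ 2 * (1 / (1 + w ^ 2)) := by field_simp; ring
    _ ≤ _ := by gcongr; exact inv_le_psi hq1 w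

section
variable {Ω : Type*} [mΩ : MeasurableSpace Ω] {μ : Measure Ω} [IsProbabilityMeasure μ]

lemma psi_neg (q z : ℝ) : psi q (-z) = psi q z := by simp [psi]

lemma unsmooth {q γ c : ℝ} (hq : 0 < q) (hq1 : q ≤ 1) (hγ : 0 < γ) (hc : 0 < c) (S T : Ω → ℝ)
    (mS : Measurable S) (mT : Measurable T) (hT : ∀ ω, γ ^ 2 ≤ T ω)
    (hP : μ.real {ω | 3 * γ ^ 2 < T ω} ≤ 3 * γ) (x : ℝ) :
    μ.real {ω | S ω ≤ x} ≤ ∫ ω, stdNormalCDF ((x + c * γ - S ω) / Real.sqrt (T ω)) ∂μ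
        + 11200 / c ^ 2 * ∫ ω, psi q ((x - S ω) / γ) ∂μ + 3 * γ ∧
    ∫ ω, stdNormalCDF ((x - c * γ - S ω) / Real.sqrt (T ω)) ∂μ ≤ μ.real {ω | S ω ≤ x}
        + 11200 / c ^ 2 * ∫ ω, psi q ((x - S ω) / γ) ∂μ + 3 * γ := by
  have mE : MeasurableSet {ω | S ω ≤ x} := measurableSet_le mS measurable_const
  have mB : MeasurableSet {ω | 3 * γ ^ 2 < T ω} := measurableSet_lt measurable_const mT
  have e1 : μ.real {ω | S ω ≤ x} = ∫ ω, ({ω | S ω ≤ x}.indicator 1 ω : ℝ) ∂μ := (integral_indicator_one mE).symm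
  have e2 : μ.real {ω | 3 * γ ^ 2 < T ω} = ∫ ω, ({ω | 3 * γ ^ 2 < T ω}.indicator 1 ω : ℝ) ∂μ :=
    (integral_indicator_one mB).symm
  have i1 : Integrable (fun ω => ({ω | S ω ≤ x}.indicator 1 ω : ℝ)) μ := (integrable_const (1:ℝ)).indicator mE
  have i2 : Integrable (fun ω => ({ω | 3 * γ ^ 2 < T ω}.indicator 1 ω : ℝ)) μ := (integrable_const (1:ℝ)).indicator mB
  have i3 : Integrable (fun ω => psi q ((x - S ω) / γ)) μ :=
    bdd_integrable (B := 1) ((psi_continuous q).measurable.comp ((mS.const_sub x).div_const _))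
      fun ω => by rw [abs_of_pos (psi_pos _ _)]; exact psi_le_one hq _
  have i4 : ∀ x, Integrable (fun ω => stdNormalCDF ((x - S ω) / Real.sqrt (T ω))) μ := fun x =>
    bdd_integrable (B := 1) (cdf_continuous.measurable.comp
      ((mS.const_sub x).div (Real.continuous_sqrt.measurable.comp mT)))
      fun ω => by rw [abs_of_nonneg (cdf_nonneg _)]; exact cdf_le_one _
  set k := 11200 / c ^ 2 with hk
  have hk0 : 0 ≤ k := by positivity
  constructor
  · have j1 : Integrable (fun ω => stdNormalCDF ((x + c * γ - S ω) / Real.sqrt (T ω)) + k * psi q ((x - S ω) / γ)) μ :=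
      (i4 _).add (i3.const_mul k)
    have : ∫ ω, ({ω | S ω ≤ x}.indicator 1 ω : ℝ) ∂μ ≤
      ∫ ω, (stdNormalCDF ((x + c * γ - S ω) / Real.sqrt (T ω)) + k * psi q ((x - S ω) / γ)
        + ({ω | 3 * γ ^ 2 < T ω}.indicator 1 ω : ℝ)) ∂μ := by
      refine integral_mono i1 (j1.add i2) fun ω => ?_
      have hps := mul_nonneg hk0 (psi_pos q ((x - S ω) / γ)).le
      have hcd := cdf_nonneg ((x + c * γ - S ω) / Real.sqrt (T ω))
      simp only [Set.indicator_apply, Set.mem_ofPred_eq, Pi.one_apply]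
      split_ifs with h1 h2 h2
      · linarith
      · have := unsmooth_pt (q := q) hq1 hγ (hT ω) (not_lt.1 h2) hc (w := (x - S ω) / γ)
          (div_nonneg (by linarith) hγ.le) rfl
        have hw : c * γ + (x - S ω) / γ * γ = x + c * γ - S ω := by field_simp; ring
        rw [hw] at this
        linarith [cdf_tail_pos this.1, this.2]
      · linarith
      · linarith
    rw [integral_add j1 i2, integral_add (i4 _) (i3.const_mul k), integral_const_mul, ← e1, ← e2] at this
    linarith
  · have j1 : Integrable (fun ω => ({ω | S ω ≤ x}.indicator 1 ω : ℝ) + k * psi q ((x - S ω) / γ)) μ :=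
      i1.add (i3.const_mul k)
    have : ∫ ω, stdNormalCDF ((x - c * γ - S ω) / Real.sqrt (T ω)) ∂μ ≤
      ∫ ω, (({ω | S ω ≤ x}.indicator 1 ω : ℝ) + k * psi q ((x - S ω) / γ)
        + ({ω | 3 * γ ^ 2 < T ω}.indicator 1 ω : ℝ)) ∂μ := by
      refine integral_mono (i4 _) (j1.add i2) fun ω => ?_
      have hps := mul_nonneg hk0 (psi_pos q ((x - S ω) / γ)).le
      have hcd := cdf_le_one ((x - c * γ - S ω) / Real.sqrt (T ω))
      simp only [Set.indicator_apply, Set.mem_ofPred_eq, Pi.one_apply]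
      split_ifs with h1 h2 h2
      · linarith
      · linarith
      · linarith
      · have := unsmooth_pt (q := q) hq1 hγ (hT ω) (not_lt.1 h2) hc (w := -((x - S ω) / γ))
          (by rw [← neg_div]; exact div_nonneg (by linarith) hγ.le) rfl
        have hw : c * γ + -((x - S ω) / γ) * γ = -(x - c * γ - S ω) := by field_simp; ring
        rw [hw, psi_neg] at this
        have h3 := cdf_tail_neg this.1
        rw [neg_div, neg_neg] at h3
        rw [neg_div] at this
        linarith [this.2]
    rw [integral_add j1 i2, integral_add i1 (i3.const_mul k), integral_const_mul, ← e1, ← e2] at this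
    linarith

end

/-- Berry-Esseen type bound for the truncated martingale. -/
theorem clt (p : ℝ) (hp : 1 < p) : ∃ C : ℝ, 0 < C ∧ ∀ (Ω : Type) (mΩ : MeasurableSpace Ω) (μ : Measure Ω)
    (_ : IsProbabilityMeasure μ) (ℱ : Filtration ℕ mΩ) (γ : ℝ) (Y v : ℕ → Ω → ℝ) (_ : MD μ ℱ p γ Y v)
    (_ : 0 < γ) (_ : γ ≤ 1) (n : ℕ) (_ : ∑ i ∈ range n, ∫ ω, |Y i ω| ^ (2 * p) ∂μ ≤ γ ^ (2 * p + 1))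
    (_ : μ.real {ω | ∑ i ∈ range n, v i ω < 1 - γ ^ 2} ≤ 3 * γ) (x : ℝ),
    |μ.real {ω | ∑ i ∈ range n, Y i ω ≤ x} - stdNormalCDF x| ≤ C * γ := by
  have hp0 : 0 < p := by linarith
  have hp1 : 0 < p - 1 := by linarith
  obtain ⟨q, hq⟩ : ∃ q, q = 1 / 2 + 1 / (4 * p) := ⟨_, rfl⟩
  have hqh : 1 / 2 < q := by rw [hq]; have : 0 < 1 / (4 * p) := by positivity
                             linarith
  have hq0 : 0 < q := by linarith
  have hq1 : q ≤ 1 := by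
    have : 1 / (4 * p) ≤ 1 / 4 := by
      apply one_div_le_one_div_of_le <;> linarith
    linarith
  obtain ⟨α, hα⟩ : ∃ α, α = p / (p - 1) / 2 - q := ⟨_, rfl⟩
  have hα0 : 0 < α := by
    have : α = 1 / (2 * (p - 1)) - 1 / (4 * p) := by rw [hα, hq]; field_simp; ring
    rw [this, sub_pos]
    apply one_div_lt_one_div_of_lt <;> linarith
  obtain ⟨L, hL⟩ : ∃ L, L = (2 + α) / α := ⟨_, rfl⟩
  have hL0 : 0 < L := by rw [hL]; positivity
  obtain ⟨ε, hε⟩ : ∃ ε, ε = min 1 (1 / (20736 * L)) := ⟨_, rfl⟩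
  have hε0 : 0 < ε := by rw [hε]; positivity
  have hε1 : ε ≤ 1 := by rw [hε]; exact min_le_left _ _
  have hεL : 2592 * (ε * L) ≤ 1 / 8 := by
    have : ε ≤ 1 / (20736 * L) := by rw [hε]; exact min_le_right _ _
    rw [le_div_iff₀ (by positivity)] at this
    linarith
  obtain ⟨E, hE⟩ : ∃ E, E = ε ^ (-(2 * p - 2)) := ⟨_, rfl⟩
  have hE0 : 0 < E := by rw [hE]; positivity
  obtain ⟨K, hK⟩ : ∃ K, K = 2 / (1 - 1 / (2 * q)) := ⟨_, rfl⟩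
  have hK0 : 0 < K := by
    rw [hK]
    have : 1 / (2 * q) < 1 := by rw [div_lt_one (by positivity)]; linarith
    apply div_pos two_pos; linarith
  refine ⟨2 * (305 + K + 1296 * E), by positivity, ?_⟩
  intro Ω mΩ μ hμ ℱ γ Y v H hγ hγ1 n hN hV
  set S : Ω → ℝ := fun ω => ∑ i ∈ range n, Y i ω with hS
  set T : Ω → ℝ := fun ω => 1 + 2 * γ ^ 2 - ∑ j ∈ range n, v j ω with hT
  have hTγ : ∀ ω, γ ^ 2 ≤ T ω := fun ω => by simp only [hT]; linarith [H.V1 n ω]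
  have mT : Measurable T := (H.mV' n).const_sub _
  have hP : μ.real {ω | 3 * γ ^ 2 < T ω} ≤ 3 * γ := by
    have : {ω | 3 * γ ^ 2 < T ω} = {ω | ∑ i ∈ range n, v i ω < 1 - γ ^ 2} := by
      ext ω; simp only [Set.mem_ofPred_eq, hT]; constructor <;> intro h <;> linarith
    rwa [this]
  have hbd : BddAbove (Set.range fun x => |μ.real {ω | S ω ≤ x} - stdNormalCDF x|) := by
    refine ⟨1, ?_⟩
    rintro _ ⟨x, rfl⟩
    have h1 : μ.real {ω | S ω ≤ x} ≤ 1 := measureReal_le_one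
    have h2 : 0 ≤ μ.real {ω | S ω ≤ x} := measureReal_nonneg
    simp only
    rw [abs_le]
    constructor <;> linarith [cdf_nonneg x, cdf_le_one x]
  set D := ⨆ x, |μ.real {ω | S ω ≤ x} - stdNormalCDF x| with hD
  have hDx : ∀ x, |μ.real {ω | S ω ≤ x} - stdNormalCDF x| ≤ D := fun x => le_ciSup hbd x
  have hker := fun x => kernel_bound μ S (H.mS' n) hqh hγ hDx x
  rw [← hK] at hker
  have hcore := fun x => H.core hp hγ hq0 hq1 hα0 hα hε0 hε1 n hN x
  rw [← hE, ← hL] at hcore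
  have hun := fun x => unsmooth (μ := μ) hq0 hq1 hγ (c := 300) (by norm_num) S T (H.mS' n) mT hTγ hP x
  have hpsi0 : ∀ x, 0 ≤ ∫ ω, psi q ((x - S ω) / γ) ∂μ := fun x => integral_nonneg fun ω => (psi_pos _ _).le
  have hD0 : 0 ≤ D := (abs_nonneg _).trans (hDx 0)
  have hrec : ∀ x, |μ.real {ω | S ω ≤ x} - stdNormalCDF x| ≤ (305 + K + 1296 * E) * γ + D / 2 := by
    intro x
    have hA : ∀ y, |∫ ω, stdNormalCDF ((y - S ω) / Real.sqrt (T ω)) ∂μ - stdNormalCDF y|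
       ≤ 1 / 8 * (K * γ + 2 * D) + 1296 * E * γ + 2 * γ := by
      intro y
      have h1 := hcore y
      have h2 := scale_lip y (2 * γ ^ 2) (by positivity)
      have h3 : 648 * (4 * ε * L * ∫ ω, psi q ((y - S ω) / γ) ∂μ) ≤ 1 / 8 * (K * γ + 2 * D) := by
        calc 648 * (4 * ε * L * ∫ ω, psi q ((y - S ω) / γ) ∂μ)
            = (2592 * (ε * L)) * ∫ ω, psi q ((y - S ω) / γ) ∂μ := by ring
          _ ≤ 1 / 8 * (K * γ + 2 * D) := mul_le_mul hεL (hker y) (hpsi0 y) (by norm_num)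
      have h4 : γ ^ 2 ≤ γ := by nlinarith
      have h5 : |∫ ω, stdNormalCDF ((y - S ω) / Real.sqrt (T ω)) ∂μ - stdNormalCDF (y / Real.sqrt (1 + 2 * γ ^ 2))|
        ≤ 648 * (4 * ε * L * ∫ ω, psi q ((y - S ω) / γ) ∂μ + 2 * E * γ) := h1
      rw [abs_le] at h2 h5 ⊢
      constructor <;> linarith [h2.1, h2.2, h5.1, h5.2]
    have hk : (11200 : ℝ) / 300 ^ 2 * ∫ ω, psi q ((x - S ω) / γ) ∂μ ≤ 1 / 8 * (K * γ + 2 * D) :=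
      mul_le_mul (by norm_num) (hker x) (hpsi0 x) (by norm_num)
    have hu := hun x
    have a1 := hA (x + 300 * γ)
    have a2 := hA (x - 300 * γ)
    have l1 := cdf_lip x (x + 300 * γ)
    have l2 := cdf_lip x (x - 300 * γ)
    rw [show x + 300 * γ - x = 300 * γ by ring, abs_of_pos (by positivity : 0 < 300 * γ)] at l1
    rw [show x - 300 * γ - x = -(300 * γ) by ring, abs_neg, abs_of_pos (by positivity : 0 < 300 * γ)] at l2
    rw [abs_le] at a1 a2 l1 l2 ⊢
    have hKγ : 0 ≤ K * γ := by positivity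
    constructor
    · linarith [hu.2, a2.1, l2.1]
    · linarith [hu.1, a1.2, l1.2]
  have hDle : D ≤ (305 + K + 1296 * E) * γ + D / 2 := ciSup_le hrec
  intro x
  have := hDx x
  have h2 : |μ.real {ω | S ω ≤ x} - stdNormalCDF x| ≤ 2 * (305 + K + 1296 * E) * γ := by linarith
  exact h2


/-- Pointwise exponential estimate. -/
lemma exp_pt {p a s Y U : ℝ} (hp : 1 < p) (ha : 0 < a) (ha1 : a ≤ 1) (hs : |s| = 1)
    (hU : U = if Y ^ 2 ≤ a then Y ^ 2 else 0) :
    Real.exp (s * U / a) ≤ 1 + s * Y ^ 2 / a + Y ^ 2 + 2 * a ^ (1 - 2 * p) * |Y| ^ (2 * p) := by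
  have hsle : s ≤ 1 ∧ -1 ≤ s := ⟨by linarith [le_abs_self s], by linarith [neg_abs_le s]⟩
  have hs2 : s ^ 2 = 1 := by rw [← sq_abs, hs]; norm_num
  have hk : 0 ≤ a ^ (1 - 2 * p) * |Y| ^ (2 * p) := by positivity
  split_ifs at hU with h
  · have h1 : |s * U / a| ≤ 1 := by
      rw [abs_div, abs_mul, hs, one_mul, hU, abs_of_nonneg (sq_nonneg _), abs_of_pos ha, div_le_one ha]
      exact h
    have h2 := Real.abs_exp_sub_one_sub_id_le h1
    have h3 := (abs_le.1 h2).2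
    have h4 : (s * U / a) ^ 2 ≤ Y ^ 2 + 2 * a ^ (1 - 2 * p) * |Y| ^ (2 * p) := by
      rw [hU]
      have e : (s * Y ^ 2 / a) ^ 2 = Y ^ 2 * (Y ^ 2 / a ^ 2) := by
        rw [div_pow, mul_pow, hs2]; ring
      rw [e]
      rcases le_total |Y| a with hY | hY
      · have : Y ^ 2 / a ^ 2 ≤ 1 := by
          rw [div_le_one (by positivity), ← sq_abs]; exact pow_le_pow_left₀ (abs_nonneg _) hY 2
        nlinarith [sq_nonneg Y]
      · have h5 := sq_le_pow hp ha hY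
        rw [sq_abs] at h5
        have h6 : Y ^ 2 / a ^ 2 ≤ 1 / a := by
          rw [div_le_div_iff₀ (by positivity) ha]; nlinarith
        have h7 : Y ^ 2 * (Y ^ 2 / a ^ 2) ≤ a ^ (-(2 * p - 2)) * |Y| ^ (2 * p) * (1 / a) :=
          mul_le_mul h5 h6 (by positivity) (by positivity)
        have e8 : a ^ (1 - 2 * p) = a ^ (-(2 * p - 2)) * (1 / a) := by
          rw [show 1 - 2 * p = -(2 * p - 2) - 1 by ring, Real.rpow_sub_one ha.ne']; ring
        have h9 : a ^ (-(2 * p - 2)) * |Y| ^ (2 * p) * (1 / a) = a ^ (1 - 2 * p) * |Y| ^ (2 * p) := by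
          rw [e8]; ring
        nlinarith [sq_nonneg Y]
    rw [hU] at h3 h4 ⊢
    linarith
  · push Not at h
    rw [hU]
    have ha2 : a ≤ |Y| := by
      have : a ^ 2 ≤ |Y| ^ 2 := by rw [sq_abs]; nlinarith
      exact (pow_le_pow_iff_left₀ ha.le (abs_nonneg _) two_ne_zero).1 this
    have h5 := sq_le_pow hp ha ha2
    rw [sq_abs] at h5
    have e8 : a ^ (1 - 2 * p) = a ^ (-(2 * p - 2)) * (1 / a) := by
      rw [show 1 - 2 * p = -(2 * p - 2) - 1 by ring, Real.rpow_sub_one ha.ne']; ring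
    have h6 : Y ^ 2 / a ≤ a ^ (1 - 2 * p) * |Y| ^ (2 * p) := by
      rw [e8, div_eq_mul_one_div]
      calc Y ^ 2 * (1 / a) ≤ a ^ (-(2 * p - 2)) * |Y| ^ (2 * p) * (1 / a) := by gcongr
        _ = _ := by ring
    have h7 : 0 ≤ Y ^ 2 / a := by positivity
    have h8 : s * Y ^ 2 / a = s * (Y ^ 2 / a) := by ring
    simp only [mul_zero, zero_div, Real.exp_zero]
    rw [h8]
    nlinarith [sq_nonneg Y]

lemma markov {Ω : Type*} [mΩ : MeasurableSpace Ω] {μ : Measure Ω} [IsProbabilityMeasure μ]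
    {f : Ω → ℝ} (h0 : ∀ ω, 0 ≤ f ω) (hf : Integrable f μ) {c e : ℝ} (he : 0 < e) (hc : ∫ ω, f ω ∂μ ≤ c) :
    μ.real {ω | e ≤ f ω} ≤ c / e := by
  rw [le_div_iff₀ he, mul_comm]
  exact (mul_meas_ge_le_integral_of_nonneg (Eventually.of_forall h0) hf e).trans hc

/-- Weak formulation of conditional `2p`-moments. -/
structure MR {Ω : Type*} [mΩ : MeasurableSpace Ω] (μ : Measure Ω) (ℱ : Filtration ℕ mΩ)
    (p : ℝ) (Y r : ℕ → Ω → ℝ) : Prop where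
  mr : ∀ i, Measurable[ℱ i] (r i)
  r0 : ∀ i ω, 0 ≤ r i ω
  ir : ∀ i, Integrable (r i) μ
  h3 : ∀ i (ξ : Ω → ℝ), Measurable[ℱ i] ξ → (∃ B, ∀ ω, |ξ ω| ≤ B) →
    ∫ ω, ξ ω * |Y i ω| ^ (2 * p) ∂μ = ∫ ω, ξ ω * r i ω ∂μ

section
variable {Ω : Type*} [mΩ : MeasurableSpace Ω] {μ : Measure Ω} [IsProbabilityMeasure μ]
  {ℱ : Filtration ℕ mΩ} {p γ : ℝ} {Y v r : ℕ → Ω → ℝ}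

lemma expo (H : MD μ ℱ p γ Y v) (R : MR μ ℱ p Y r) (hp : 1 < p) {a s : ℝ}
    (ha : 0 < a) (ha1 : a ≤ 1) (hs : |s| = 1) (U Q : ℕ → Ω → ℝ)
    (hU : ∀ i ω, U i ω = if Y i ω ^ 2 ≤ a then Y i ω ^ 2 else 0)
    (hQ : ∀ i ω, Q i ω = s * v i ω / a + v i ω + 2 * a ^ (1 - 2 * p) * r i ω) (k : ℕ) :
    Measurable[ℱ k] (fun ω => Real.exp (∑ i ∈ range k, (s * U i ω / a - Q i ω))) ∧
    (∃ B, ∀ ω, |Real.exp (∑ i ∈ range k, (s * U i ω / a - Q i ω))| ≤ B) ∧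
    ∫ ω, Real.exp (∑ i ∈ range k, (s * U i ω / a - Q i ω)) ∂μ ≤ 1 := by
  set κ := 2 * a ^ (1 - 2 * p) with hκ
  have hκ0 : 0 ≤ κ := by positivity
  have mU : ∀ i, Measurable[ℱ (i + 1)] (U i) := fun i => by
    have : U i = fun ω => if Y i ω ^ 2 ≤ a then Y i ω ^ 2 else 0 := funext (hU i)
    rw [this]
    exact Measurable.ite (measurableSet_le ((H.mY i).pow_const 2) measurable_const)
      ((H.mY i).pow_const 2) measurable_const
  have mQ : ∀ i, Measurable[ℱ i] (Q i) := fun i => by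
    have : Q i = fun ω => s * v i ω / a + v i ω + κ * r i ω := funext (hQ i)
    rw [this]
    exact ((((H.mv i).const_mul s).div_const a).add (H.mv i)).add ((R.mr i).const_mul κ)
  have hUb : ∀ i ω, |s * U i ω / a| ≤ 1 := fun i ω => by
    rw [abs_div, abs_mul, hs, one_mul, abs_of_pos ha, div_le_one ha, hU]
    split_ifs with h
    · rwa [abs_of_nonneg (sq_nonneg _)]
    · simpa using ha.le
  have hQb : ∀ i ω, -(γ ^ 2 / a) ≤ Q i ω := fun i ω => by
    rw [hQ]
    have h1 := H.v0 i ω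
    have h2 := H.vγ i ω
    have h3 := mul_nonneg hκ0 (R.r0 i ω)
    have h4 : v i ω / a ≤ γ ^ 2 / a := by gcongr
    have h5 : 0 ≤ v i ω / a := by positivity
    have h6 : -1 ≤ s := by linarith [neg_abs_le s]
    have h7 : s * v i ω / a = s * (v i ω / a) := by ring
    rw [h7]
    nlinarith
  induction k with
  | zero => exact ⟨by simp, ⟨1, by simp⟩, by simp⟩
  | succ k ih =>
    obtain ⟨mZ, ⟨B, hB⟩, hZ⟩ := ih
    have e : ∀ ω, Real.exp (∑ i ∈ range (k + 1), (s * U i ω / a - Q i ω))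
      = (Real.exp (∑ i ∈ range k, (s * U i ω / a - Q i ω)) * Real.exp (- Q k ω)) * Real.exp (s * U k ω / a) := fun ω => by
      rw [Finset.sum_range_succ, ← Real.exp_add, ← Real.exp_add]; congr 1; ring
    simp_rw [e]
    set Z : Ω → ℝ := fun ω => Real.exp (∑ i ∈ range k, (s * U i ω / a - Q i ω)) with hZd
    set ξ : Ω → ℝ := fun ω => Z ω * Real.exp (- Q k ω) with hξ
    have mξ : Measurable[ℱ k] ξ := mZ.mul (Real.measurable_exp.comp (mQ k).neg)
    have mξ' : Measurable ξ := mξ.mono (ℱ.le _) le_rfl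
    have mZ' : Measurable Z := mZ.mono (ℱ.le _) le_rfl
    have hZ0 : ∀ ω, 0 < Z ω := fun ω => Real.exp_pos _
    have hξ0 : ∀ ω, 0 < ξ ω := fun ω => mul_pos (hZ0 ω) (Real.exp_pos _)
    have hZB : ∀ ω, Z ω ≤ B := fun ω => (le_abs_self _).trans (hB ω)
    have hξB : ∀ ω, |ξ ω| ≤ B * Real.exp (γ ^ 2 / a) := fun ω => by
      rw [abs_of_pos (hξ0 ω)]
      exact mul_le_mul (hZB ω) (Real.exp_le_exp.2 (by linarith [hQb k ω])) (Real.exp_pos _).le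
        ((hZ0 ω).le.trans (hZB ω))
    have mE : Measurable[ℱ (k + 1)] (fun ω => Real.exp (s * U k ω / a)) :=
      Real.measurable_exp.comp (((mU k).const_mul s).div_const a)
    have hEB : ∀ ω, Real.exp (s * U k ω / a) ≤ Real.exp 1 := fun ω =>
      Real.exp_le_exp.2 ((le_abs_self _).trans (hUb k ω))
    have mP : Measurable[ℱ (k + 1)] (fun ω => ξ ω * Real.exp (s * U k ω / a)) :=
      (mξ.mono (ℱ.mono (Nat.le_succ k)) le_rfl).mul mE
    have hPB : ∀ ω, |ξ ω * Real.exp (s * U k ω / a)| ≤ B * Real.exp (γ ^ 2 / a) * Real.exp 1 := fun ω => by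
      rw [abs_mul, abs_of_pos (Real.exp_pos _)]
      exact mul_le_mul (hξB ω) (hEB ω) (Real.exp_pos _).le ((abs_nonneg _).trans (hξB ω))
    refine ⟨mP, ⟨_, hPB⟩, ?_⟩
    have iξ : Integrable ξ μ := bdd_integrable mξ' hξB
    have i1 := bdd_mul_integrable mξ' hξB (H.iS2 hp k)
    have i2 := bdd_mul_integrable mξ' hξB (H.iY k)
    have i3 := bdd_mul_integrable mξ' hξB (H.iv k)
    have i4 := bdd_mul_integrable mξ' hξB (R.ir k)
    have iP : Integrable (fun ω => ξ ω * Real.exp (s * U k ω / a)) μ :=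
      bdd_integrable (mP.mono (ℱ.le _) le_rfl) hPB
    have j1 : Integrable (fun ω => ξ ω + (s / a + 1) * (ξ ω * Y k ω ^ 2)) μ := iξ.add (i1.const_mul _)
    have j2 : Integrable (fun ω => ξ ω + (s / a + 1) * (ξ ω * v k ω)) μ := iξ.add (i3.const_mul _)
    have s1 : ∫ ω, ξ ω * Real.exp (s * U k ω / a) ∂μ
      ≤ ∫ ω, (ξ ω + (s / a + 1) * (ξ ω * Y k ω ^ 2) + κ * (ξ ω * |Y k ω| ^ (2 * p))) ∂μ := by
      refine integral_mono iP (j1.add (i2.const_mul κ)) fun ω => ?_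
      have := mul_le_mul_of_nonneg_left (exp_pt hp ha ha1 hs (hU k ω)) (hξ0 ω).le
      refine this.trans (le_of_eq ?_)
      simp only [hκ]; ring
    have s2 : ∫ ω, (ξ ω + (s / a + 1) * (ξ ω * v k ω) + κ * (ξ ω * r k ω)) ∂μ ≤ ∫ ω, Z ω ∂μ := by
      refine integral_mono (j2.add (i4.const_mul κ)) (bdd_integrable mZ' hB) fun ω => ?_
      have h1 := Real.add_one_le_exp (Q k ω)
      have h2 := mul_le_mul_of_nonneg_left h1 (hξ0 ω).le
      have h3 : ξ ω * Real.exp (Q k ω) = Z ω := by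
        simp only [hξ]; rw [mul_assoc, ← Real.exp_add]; simp
      rw [h3] at h2
      refine le_trans (le_of_eq ?_) h2
      rw [hQ]; ring
    rw [integral_add j1 (i2.const_mul κ), integral_add iξ (i1.const_mul _), integral_const_mul,
      integral_const_mul, H.h2 k ξ mξ ⟨_, hξB⟩, R.h3 k ξ mξ ⟨_, hξB⟩] at s1
    rw [integral_add j2 (i4.const_mul κ), integral_add iξ (i3.const_mul _), integral_const_mul,
      integral_const_mul] at s2
    linarith

lemma qv_one (H : MD μ ℱ p γ Y v) (R : MR μ ℱ p Y r) (hp : 1 < p) (hγ : 0 < γ) (hγ1 : γ ≤ 1) (n : ℕ)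
    (hN : ∑ i ∈ range n, ∫ ω, |Y i ω| ^ (2 * p) ∂μ ≤ γ ^ (2 * p + 1)) {s : ℝ} (hs : |s| = 1) :
    μ.real {ω | γ < s * (∑ i ∈ range n, Y i ω ^ 2 - ∑ i ∈ range n, v i ω)}
      ≤ (Real.exp 4 * (⌈2 * p⌉₊.factorial : ℝ) + 2) * γ := by
  have hp0 : 0 < p := by linarith
  obtain ⟨η, hη⟩ : ∃ η, η = 1 / (2 * p) := ⟨_, rfl⟩
  have hη0 : 0 < η := by rw [hη]; positivity
  have hηp : η * (2 * p) = 1 := by rw [hη]; field_simp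
  obtain ⟨a, had⟩ : ∃ a, a = γ ^ (1 + η) := ⟨_, rfl⟩
  have ha : 0 < a := by rw [had]; positivity
  have ha1 : a ≤ 1 := by rw [had]; exact Real.rpow_le_one hγ.le hγ1 (by linarith)
  set U : ℕ → Ω → ℝ := fun i ω => if Y i ω ^ 2 ≤ a then Y i ω ^ 2 else 0 with hU
  set Q : ℕ → Ω → ℝ := fun i ω => s * v i ω / a + v i ω + 2 * a ^ (1 - 2 * p) * r i ω with hQ
  obtain ⟨mZ, ⟨B, hB⟩, hZ⟩ := expo H R hp ha ha1 hs U Q (fun _ _ => rfl) (fun _ _ => rfl) n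
  set Z : Ω → ℝ := fun ω => Real.exp (∑ i ∈ range n, (s * U i ω / a - Q i ω)) with hZd
  have iZ : Integrable Z μ := bdd_integrable (mZ.mono (ℱ.le _) le_rfl) hB
  have hNr : ∑ i ∈ range n, ∫ ω, r i ω ∂μ ≤ γ ^ (2 * p + 1) := by
    refine le_trans (le_of_eq (Finset.sum_congr rfl fun i _ => ?_)) hN
    have := R.h3 i (fun _ => 1) measurable_const ⟨1, by simp⟩
    simpa using this.symm
  have hg1 : γ ^ (2 * p + 1) / γ ^ (2 * p) = γ := by
    rw [← Real.rpow_sub hγ]; simp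
  -- three bad events
  have P1 : μ.real {ω | Real.exp (γ ^ (-η) - 4) ≤ Z ω} ≤ Real.exp 4 * (⌈2 * p⌉₊.factorial : ℝ) * γ := by
    refine (markov (fun ω => (Real.exp_pos _).le) iZ (Real.exp_pos _) hZ).trans ?_
    set M := ⌈2 * p⌉₊ with hM
    have hMp : 2 * p ≤ M := Nat.le_ceil _
    have h1 := Real.pow_div_factorial_le_exp (γ ^ (-η)) (by positivity) M
    have hf : 0 < (M.factorial : ℝ) := by positivity
    rw [div_le_iff₀ hf] at h1
    have h2 : 1 ≤ (γ ^ (-η)) ^ M * γ := by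
      have : (γ ^ (-η)) ^ M * γ = γ ^ (1 - η * M) := by
        rw [← Real.rpow_natCast, ← Real.rpow_mul hγ.le, ← Real.rpow_add_one hγ.ne']; congr 1; ring
      rw [this]
      exact Real.one_le_rpow_of_pos_of_le_one_of_nonpos hγ hγ1 (by nlinarith)
    rw [Real.exp_sub, one_div_div, div_le_iff₀ (Real.exp_pos _)]
    have h3 : 1 ≤ Real.exp (γ ^ (-η)) * M.factorial * γ := h2.trans (by gcongr)
    have := mul_le_mul_of_nonneg_left h3 (Real.exp_pos 4).le
    linarith
  have P2 : μ.real {ω | γ ^ (2 * p) ≤ ∑ i ∈ range n, r i ω} ≤ γ := by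
    have := markov (μ := μ) (f := fun ω => ∑ i ∈ range n, r i ω) (e := γ ^ (2 * p)) (c := γ ^ (2 * p + 1))
      (fun ω => Finset.sum_nonneg fun i _ => R.r0 i ω) (integrable_finsetSum _ fun i _ => R.ir i) (by positivity)
      (by rw [integral_finsetSum _ fun i _ => R.ir i]; exact hNr)
    rwa [hg1] at this
  have P3 : μ.real {ω | a ^ p ≤ ∑ i ∈ range n, |Y i ω| ^ (2 * p)} ≤ γ := by
    have := markov (μ := μ) (f := fun ω => ∑ i ∈ range n, |Y i ω| ^ (2 * p)) (e := a ^ p) (c := γ ^ (2 * p + 1))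
      (fun ω => Finset.sum_nonneg fun i _ => by positivity) (integrable_finsetSum _ fun i _ => H.iY i) (by positivity)
      (by rw [integral_finsetSum _ fun i _ => H.iY i]; exact hN)
    refine this.trans ?_
    rw [had, ← Real.rpow_mul hγ.le, ← Real.rpow_sub hγ]
    calc γ ^ (2 * p + 1 - (1 + η) * p) ≤ γ ^ (1:ℝ) :=
          Real.rpow_le_rpow_of_exponent_ge hγ hγ1 (by nlinarith)
      _ = γ := Real.rpow_one γ
  have hsub : {ω | γ < s * (∑ i ∈ range n, Y i ω ^ 2 - ∑ i ∈ range n, v i ω)} ⊆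
      {ω | Real.exp (γ ^ (-η) - 4) ≤ Z ω} ∪ ({ω | γ ^ (2 * p) ≤ ∑ i ∈ range n, r i ω} ∪
        {ω | a ^ p ≤ ∑ i ∈ range n, |Y i ω| ^ (2 * p)}) := by
    intro ω hω
    by_contra hc
    simp only [Set.mem_union, Set.mem_ofPred_eq, not_or, not_le] at hc hω
    obtain ⟨c1, c2, c3⟩ := hc
    have hYU : ∀ i ∈ range n, U i ω = Y i ω ^ 2 := fun i hi => by
      simp only [hU]
      rw [if_pos]
      by_contra hlt
      push Not at hlt
      have h1 : a ^ p ≤ |Y i ω| ^ (2 * p) := by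
        rw [Real.rpow_mul (abs_nonneg _), Real.rpow_two, sq_abs]
        exact Real.rpow_le_rpow ha.le hlt.le hp0.le
      have h2 : |Y i ω| ^ (2 * p) ≤ ∑ i ∈ range n, |Y i ω| ^ (2 * p) :=
        Finset.single_le_sum (f := fun i => |Y i ω| ^ (2 * p)) (fun j _ => by positivity) hi
      linarith
    have e1 : ∑ i ∈ range n, (s * U i ω / a - Q i ω)
        = s * (∑ i ∈ range n, Y i ω ^ 2 - ∑ i ∈ range n, v i ω) / a - ∑ i ∈ range n, v i ω
          - 2 * a ^ (1 - 2 * p) * ∑ i ∈ range n, r i ω := by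
      rw [Finset.sum_congr rfl (g := fun i => s / a * Y i ω ^ 2 - s / a * v i ω - v i ω - 2 * a ^ (1 - 2 * p) * r i ω)]
      · rw [Finset.sum_sub_distrib, Finset.sum_sub_distrib, Finset.sum_sub_distrib, ← Finset.mul_sum,
          ← Finset.mul_sum, ← Finset.mul_sum]
        ring
      · intro i hi
        rw [hYU i hi]; simp only [hQ]; ring
    have hV := H.V1 n ω
    have h1 : γ ^ (-η) ≤ s * (∑ i ∈ range n, Y i ω ^ 2 - ∑ i ∈ range n, v i ω) / a := by
      rw [le_div_iff₀ ha, had, ← Real.rpow_add hγ, show -η + (1 + η) = 1 by ring, Real.rpow_one]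
      exact hω.le
    have h2 : a ^ (1 - 2 * p) * ∑ i ∈ range n, r i ω ≤ 1 := by
      calc a ^ (1 - 2 * p) * ∑ i ∈ range n, r i ω ≤ a ^ (1 - 2 * p) * γ ^ (2 * p) := by gcongr
        _ = γ ^ ((1 + η) * (1 - 2 * p) + 2 * p) := by
            rw [had, ← Real.rpow_mul hγ.le, ← Real.rpow_add hγ]
        _ ≤ 1 := Real.rpow_le_one hγ.le hγ1 (by nlinarith)
    have h3 : γ ^ 2 ≤ 1 := by nlinarith
    have : Real.exp (γ ^ (-η) - 4) ≤ Z ω := by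
      simp only [hZd]
      rw [e1]
      apply Real.exp_le_exp.2
      linarith
    linarith
  refine (measureReal_mono hsub).trans ((measureReal_union_le _ _).trans ?_)
  have := measureReal_union_le (μ := μ) {ω | γ ^ (2 * p) ≤ ∑ i ∈ range n, r i ω}
        {ω | a ^ p ≤ ∑ i ∈ range n, |Y i ω| ^ (2 * p)}
  linarith

lemma qv_bound (H : MD μ ℱ p γ Y v) (R : MR μ ℱ p Y r) (hp : 1 < p) (hγ : 0 < γ) (hγ1 : γ ≤ 1) (n : ℕ)
    (hN : ∑ i ∈ range n, ∫ ω, |Y i ω| ^ (2 * p) ∂μ ≤ γ ^ (2 * p + 1)) :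
    μ.real {ω | γ < |∑ i ∈ range n, Y i ω ^ 2 - ∑ i ∈ range n, v i ω|}
      ≤ 2 * (Real.exp 4 * (⌈2 * p⌉₊.factorial : ℝ) + 2) * γ := by
  have h1 := qv_one H R hp hγ hγ1 n hN (s := 1) (by simp)
  have h2 := qv_one H R hp hγ hγ1 n hN (s := -1) (by simp)
  have hsub : {ω | γ < |∑ i ∈ range n, Y i ω ^ 2 - ∑ i ∈ range n, v i ω|} ⊆
      {ω | γ < 1 * (∑ i ∈ range n, Y i ω ^ 2 - ∑ i ∈ range n, v i ω)} ∪
      {ω | γ < -1 * (∑ i ∈ range n, Y i ω ^ 2 - ∑ i ∈ range n, v i ω)} := by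
    intro ω hω
    simp only [Set.mem_union, Set.mem_ofPred_eq, one_mul, neg_mul] at hω ⊢
    exact lt_abs.1 hω
  refine (measureReal_mono hsub).trans ((measureReal_union_le _ _).trans ?_)
  linarith
end


lemma sum_Icc_shift (n : ℕ) (f : ℕ → ℝ) : ∑ i ∈ Finset.Icc 1 n, f i = ∑ i ∈ range n, f (i + 1) := by
  induction n with
  | zero => simp
  | succ n ih => rw [Finset.sum_Icc_succ_top (by omega), ih, Finset.sum_range_succ]

section
variable {Ω : Type*} [mΩ : MeasurableSpace Ω] {μ : Measure Ω} [IsProbabilityMeasure μ]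

lemma pull {m : MeasurableSpace Ω} (hm : m ≤ mΩ) {ξ f : Ω → ℝ} (hξ : Measurable[m] ξ)
    (hf : Integrable f μ) (hξf : Integrable (fun ω => ξ ω * f ω) μ) :
    ∫ ω, ξ ω * f ω ∂μ = ∫ ω, ξ ω * (μ[f | m]) ω ∂μ := by
  have h := condExp_mul_of_stronglyMeasurable_left (μ := μ) (m := m) hξ.stronglyMeasurable
    (show Integrable (ξ * f) μ from hξf) hf
  have h2 := integral_condExp (μ := μ) hm (f := ξ * f)
  rw [integral_congr_ae h] at h2
  exact h2.symm

lemma condExp_pow {m : MeasurableSpace Ω} (hm : m ≤ mΩ) {p : ℝ} (hp : 1 < p) {f : Ω → ℝ}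
    (mf : Measurable[mΩ] f) (hf : Integrable (fun ω => |f ω| ^ p) μ) :
    Integrable (fun ω => |(μ[f | m]) ω| ^ p) μ ∧
    ∫ ω, |(μ[f | m]) ω| ^ p ∂μ ≤ ∫ ω, |f ω| ^ p ∂μ := by
  have hp0 : 0 < p := by linarith
  have e1 : ENNReal.ofReal p ≠ 0 := by simpa using hp0
  have e2 : ENNReal.ofReal p ≠ ⊤ := ENNReal.ofReal_ne_top
  have e3 : (ENNReal.ofReal p).toReal = p := ENNReal.toReal_ofReal hp0.le
  have e4 : (1 : ENNReal) ≤ ENNReal.ofReal p := by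
    rw [← ENNReal.ofReal_one]; exact ENNReal.ofReal_le_ofReal hp.le
  have hL : MemLp f (ENNReal.ofReal p) μ := by
    rw [← integrable_norm_rpow_iff mf.aestronglyMeasurable e1 e2, e3]
    simpa using hf
  have hL2 : MemLp (μ[f | m]) (ENNReal.ofReal p) μ := hL.condExp e4
  have hI : Integrable (fun ω => |(μ[f | m]) ω| ^ p) μ := by
    have := hL2.integrable_norm_rpow e1 e2
    rw [e3] at this
    simpa using this
  refine ⟨hI, ?_⟩
  have h := eLpNorm_condExp_le_eLpNorm (μ := μ) (m := m) f e4
  rw [hL.eLpNorm_eq_integral_rpow_norm e1 e2, hL2.eLpNorm_eq_integral_rpow_norm e1 e2, e3,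
    ENNReal.ofReal_le_ofReal_iff (by positivity)] at h
  have := (Real.rpow_le_rpow_iff (integral_nonneg fun ω => by positivity)
    (integral_nonneg fun ω => by positivity) (by positivity)).1 h
  simpa using this

lemma construct (p : ℝ) (hp : 1 < p) (ℱ : Filtration ℕ mΩ) (n : ℕ) (X : ℕ → Ω → ℝ)
    (mX : ∀ i, Measurable[ℱ (i + 1)] (X i)) (iX : ∀ i, Integrable (X i) μ)
    (cX : ∀ i < n, μ[X i | ℱ i] =ᵐ[μ] (0 : Ω → ℝ))
    (pX : ∀ i < n, Integrable (fun ω => |X i ω| ^ (2 * p)) μ)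
    (CV : Ω → ℝ) (hCV : ∀ ω, CV ω = ∑ i ∈ range n, (μ[fun ω' => X i ω' ^ 2 | ℱ i]) ω)
    {γ : ℝ} (hγ : 0 < γ)
    (hN : (∑ i ∈ range n, ∫ ω, |X i ω| ^ (2 * p) ∂μ) + (∫ ω, |CV ω - 1| ^ p ∂μ) ≤ γ ^ (2 * p + 1)) :
    ∃ Y v r : ℕ → Ω → ℝ, MD μ ℱ p γ Y v ∧ MR μ ℱ p Y r ∧
      ∑ i ∈ range n, ∫ ω, |Y i ω| ^ (2 * p) ∂μ ≤ γ ^ (2 * p + 1) ∧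
      ∃ B : Set Ω, μ.real B ≤ γ ∧ ∀ ω ∉ B, (∀ i ∈ range n, Y i ω = X i ω) ∧
        ∑ i ∈ range n, v i ω = CV ω ∧ |CV ω - 1| ≤ γ ^ 2 := by
  have hp0 : 0 < p := by linarith
  have mX' : ∀ i, Measurable (X i) := fun i => (mX i).mono (ℱ.le _) le_rfl
  set g : ℕ → Ω → ℝ := fun i => μ[fun ω' => X i ω' ^ 2 | ℱ i] with hg
  set c : ℕ → Ω → ℝ := fun i ω => max (g i ω) 0 with hc
  set e : ℕ → Ω → ℝ := fun i => μ[fun ω' => |X i ω'| ^ (2 * p) | ℱ i] with he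
  have mg : ∀ i, Measurable[ℱ i] (g i) := fun i => stronglyMeasurable_condExp.measurable
  have me : ∀ i, Measurable[ℱ i] (e i) := fun i => stronglyMeasurable_condExp.measurable
  have mc : ∀ i, Measurable[ℱ i] (c i) := fun i => (mg i).max measurable_const
  have c0 : ∀ i ω, 0 ≤ c i ω := fun i ω => le_max_right _ _
  have gc : ∀ i, g i =ᵐ[μ] c i := fun i => by
    have : 0 ≤ᵐ[μ] g i := condExp_nonneg (Eventually.of_forall fun ω => sq_nonneg _)
    filter_upwards [this] with ω hω
    exact (max_eq_left hω).symm
  have ee : ∀ i, e i =ᵐ[μ] fun ω => max (e i ω) 0 := fun i => by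
    have : 0 ≤ᵐ[μ] e i := condExp_nonneg (Eventually.of_forall fun ω => by
      simp only [Pi.zero_apply]; positivity)
    filter_upwards [this] with ω hω
    exact (max_eq_left hω).symm
  set A : ℕ → Set Ω := fun i => {ω | i < n ∧ ∑ j ∈ range (i + 1), c j ω ≤ 1 + γ ^ 2 ∧ c i ω ≤ γ ^ 2} with hA
  have mA : ∀ i, MeasurableSet[ℱ i] (A i) := fun i => by
    have m1 : MeasurableSet[ℱ i] {ω | ∑ j ∈ range (i + 1), c j ω ≤ 1 + γ ^ 2} :=
      measurableSet_le (Finset.measurable_sum _ fun j hj =>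
        (mc j).mono (ℱ.mono (by have := mem_range.1 hj; omega)) le_rfl) measurable_const
    have m2 : MeasurableSet[ℱ i] {ω | c i ω ≤ γ ^ 2} := measurableSet_le (mc i) measurable_const
    by_cases hin : i < n
    · have : A i = {ω | ∑ j ∈ range (i + 1), c j ω ≤ 1 + γ ^ 2} ∩ {ω | c i ω ≤ γ ^ 2} := by
        ext ω; simp [hA, hin]
      rw [this]; exact m1.inter m2
    · have : A i = ∅ := by ext ω; simp [hA, hin]
      rw [this]; exact @MeasurableSet.empty _ (ℱ i)
  have hAe : ∀ i, ¬ i < n → A i = ∅ := fun i hin => by ext ω; simp [hA, hin]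
  set Y : ℕ → Ω → ℝ := fun i => (A i).indicator (X i) with hY
  set v : ℕ → Ω → ℝ := fun i => (A i).indicator (c i) with hv
  set r : ℕ → Ω → ℝ := fun i => (A i).indicator (fun ω => max (e i ω) 0) with hr
  have hYp : ∀ i, (fun ω => |Y i ω| ^ (2 * p)) = (A i).indicator (fun ω => |X i ω| ^ (2 * p)) := fun i => by
    ext ω
    simp only [hY, Set.indicator_apply]
    split_ifs
    · rfl
    · rw [abs_zero, Real.zero_rpow (by positivity)]
  have hYs : ∀ i, (fun ω => Y i ω ^ 2) = (A i).indicator (fun ω => X i ω ^ 2) := fun i => by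
    ext ω
    simp only [hY, Set.indicator_apply]
    split_ifs <;> simp
  have mA' : ∀ i, MeasurableSet (A i) := fun i => ℱ.le _ _ (mA i)
  have sqX : ∀ i < n, Integrable (fun ω => X i ω ^ 2) μ := fun i hi => by
    refine ((integrable_const (1:ℝ)).add (pX i hi)).mono' ((mX' i).pow_const 2).aestronglyMeasurable
      (Eventually.of_forall fun ω => ?_)
    simp only [Pi.add_apply, Real.norm_eq_abs]
    rw [abs_of_nonneg (sq_nonneg _), ← sq_abs]
    rcases le_total |X i ω| 1 with h | h
    · have : 0 ≤ |X i ω| ^ (2 * p) := by positivity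
      nlinarith [abs_nonneg (X i ω)]
    · have : |X i ω| ^ (2:ℝ) ≤ |X i ω| ^ (2 * p) := Real.rpow_le_rpow_of_exponent_le h (by linarith)
      rw [Real.rpow_two] at this
      linarith
  have iYp : ∀ i, Integrable (fun ω => |Y i ω| ^ (2 * p)) μ := fun i => by
    rw [hYp i]
    by_cases hin : i < n
    · exact (pX i hin).indicator (mA' i)
    · rw [hAe i hin]; simp
  -- general identity
  have gen : ∀ i (f : Ω → ℝ) (ξ : Ω → ℝ), Integrable f μ → Measurable[ℱ i] ξ →
      Integrable (fun ω => ξ ω * (A i).indicator f ω) μ →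
      ∫ ω, ξ ω * (A i).indicator f ω ∂μ = ∫ ω, (A i).indicator ξ ω * (μ[f | ℱ i]) ω ∂μ := by
    intro i f ξ hf hξ hi
    have e1 : (fun ω => ξ ω * (A i).indicator f ω) = fun ω => (A i).indicator ξ ω * f ω := by
      ext ω; simp only [Set.indicator_apply]; split_ifs <;> simp
    rw [e1] at hi ⊢
    exact pull (ℱ.le i) (hξ.indicator (mA i)) hf hi
  have gen2 : ∀ i (f k : Ω → ℝ) (ξ : Ω → ℝ), (i < n → Integrable f μ) → (i < n → μ[f | ℱ i] =ᵐ[μ] k) →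
      Measurable[ℱ i] ξ → Integrable (fun ω => ξ ω * (A i).indicator f ω) μ →
      ∫ ω, ξ ω * (A i).indicator f ω ∂μ = ∫ ω, ξ ω * (A i).indicator k ω ∂μ := by
    intro i f k ξ hf hk hξ hi
    by_cases hin : i < n
    · rw [gen i f ξ (hf hin) hξ hi]
      refine integral_congr_ae ?_
      filter_upwards [hk hin] with ω hω
      rw [hω]
      simp only [Set.indicator_apply]; split_ifs <;> simp
    · rw [hAe i hin]; simp
  have H : MD μ ℱ p γ Y v := by
    refine ⟨fun i => ?_, fun i => ?_, fun i ω => ?_, fun i ω => ?_, fun m ω => ?_, iYp, ?_, ?_⟩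
    · exact (mX i).indicator (ℱ.mono (Nat.le_succ i) _ (mA i))
    · exact (mc i).indicator (mA i)
    · exact Set.indicator_nonneg (fun ω _ => c0 i ω) ω
    · simp only [hv, Set.indicator_apply]
      split_ifs with h
      · exact h.2.2
      · positivity
    · induction m with
      | zero => simp; positivity
      | succ m ih =>
        by_cases h : ω ∈ A m
        · refine le_trans (Finset.sum_le_sum fun i _ => ?_) h.2.1
          exact Set.indicator_le_self' (fun ω _ => c0 i ω) ω
        · rw [Finset.sum_range_succ]
          have : v m ω = 0 := Set.indicator_of_notMem h _
          rw [this, add_zero]; exact ih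
    · intro i ξ hξ hi
      rw [gen2 i (X i) 0 ξ (fun _ => iX i) (cX i) hξ hi]
      simp
    · intro i ξ hξ ⟨B, hB⟩
      have hys := fun ω => congrFun (hYs i) ω
      simp_rw [hys]
      refine gen2 i _ (c i) ξ (sqX i) (fun _ => gc i) hξ ?_
      refine bdd_mul_integrable (hξ.mono (ℱ.le i) le_rfl) hB ?_
      by_cases hin : i < n
      · exact (sqX i hin).indicator (mA' i)
      · rw [hAe i hin]; simp
  have R : MR μ ℱ p Y r := by
    refine ⟨fun i => ((me i).max measurable_const).indicator (mA i),
      fun i ω => Set.indicator_nonneg (fun ω _ => le_max_right _ _) ω, fun i => ?_, ?_⟩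
    · exact ((integrable_condExp (μ := μ) (m := ℱ i)).pos_part).indicator (mA' i)
    · intro i ξ hξ ⟨B, hB⟩
      have hyp := fun ω => congrFun (hYp i) ω
      have hi := bdd_mul_integrable (hξ.mono (ℱ.le i) le_rfl) hB (iYp i)
      simp_rw [hyp] at hi ⊢
      exact gen2 i _ _ ξ (pX i) (fun _ => ee i) hξ hi
  have hpw0 : 0 ≤ ∫ ω, |CV ω - 1| ^ p ∂μ := integral_nonneg fun ω => by positivity
  refine ⟨Y, v, r, H, R, ?_, ?_⟩
  · refine le_trans (Finset.sum_le_sum fun i hi => ?_) (le_trans (le_add_of_nonneg_right hpw0) hN)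
    refine integral_mono (iYp i) (pX i (mem_range.1 hi)) fun ω => ?_
    rw [congrFun (hYp i) ω]
    exact Set.indicator_le_self' (fun ω _ => by positivity) ω
  · -- bad event
    have hcp : ∀ i < n, Integrable (fun ω => |g i ω| ^ p) μ ∧
        ∫ ω, |g i ω| ^ p ∂μ ≤ ∫ ω, |X i ω| ^ (2 * p) ∂μ := fun i hi => by
      have e0 : ∀ ω, |X i ω ^ 2| ^ p = |X i ω| ^ (2 * p) := fun ω => by
        rw [abs_pow, Real.rpow_mul (abs_nonneg _), Real.rpow_two]
      have := condExp_pow (μ := μ) (ℱ.le i) hp (f := fun ω => X i ω ^ 2) ((mX' i).pow_const 2)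
        (by simp_rw [e0]; exact pX i hi)
      simp_rw [e0] at this
      exact this
    have gLp : ∀ i < n, MemLp (g i) (ENNReal.ofReal p) μ := fun i hi => by
      rw [← integrable_norm_rpow_iff ((mg i).mono (ℱ.le i) le_rfl).aestronglyMeasurable
        (by simpa using hp0) ENNReal.ofReal_ne_top, ENNReal.toReal_ofReal hp0.le]
      simpa using (hcp i hi).1
    have iCV : Integrable (fun ω => |CV ω - 1| ^ p) μ := by
      have h1 : MemLp (fun ω => ∑ i ∈ range n, g i ω) (ENNReal.ofReal p) μ :=
        memLp_finsetSum _ fun i hi => gLp i (mem_range.1 hi)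
      have h2 : MemLp (fun ω => CV ω - 1) (ENNReal.ofReal p) μ := by
        have := h1.sub (memLp_const (1:ℝ))
        have e : CV = fun ω => ∑ i ∈ range n, g i ω := funext hCV
        rw [e]; exact this
      have h3 := h2.integrable_norm_rpow (by simpa using hp0) ENNReal.ofReal_ne_top
      rw [ENNReal.toReal_ofReal hp0.le] at h3
      simpa using h3
    set f : Ω → ℝ := fun ω => ∑ i ∈ range n, |g i ω| ^ p + |CV ω - 1| ^ p with hf
    have is : Integrable (fun ω => ∑ i ∈ range n, |g i ω| ^ p) μ :=
      integrable_finsetSum _ fun i hi => (hcp i (mem_range.1 hi)).1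
    have if_ : Integrable f μ := is.add iCV
    have hint : ∫ ω, f ω ∂μ ≤ γ ^ (2 * p + 1) := by
      simp only [hf]
      rw [integral_add is iCV, integral_finsetSum _ fun i hi => (hcp i (mem_range.1 hi)).1]
      refine le_trans (add_le_add_left (Finset.sum_le_sum fun i hi => (hcp i (mem_range.1 hi)).2) _) hN
    have sum0 : ∀ ω, 0 ≤ ∑ i ∈ range n, |g i ω| ^ p := fun ω => Finset.sum_nonneg fun i _ => by positivity
    have hmk := markov (μ := μ) (f := f) (fun ω => add_nonneg (sum0 ω) (by positivity)) if_
      (by positivity : 0 < γ ^ (2 * p)) hint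
    rw [← Real.rpow_sub hγ, show 2 * p + 1 - 2 * p = 1 by ring, Real.rpow_one] at hmk
    have hnull : μ.real {ω | ∃ i, g i ω ≠ c i ω} = 0 := by
      have : ∀ᵐ ω ∂μ, ∀ i, g i ω = c i ω := ae_all_iff.2 gc
      rw [ae_iff] at this
      rw [Measure.real]
      simp only [not_forall] at this
      simp [this]
    refine ⟨{ω | γ ^ (2 * p) ≤ f ω} ∪ {ω | ∃ i, g i ω ≠ c i ω},
      (measureReal_union_le _ _).trans (by linarith), fun ω hω => ?_⟩
    simp only [Set.mem_union, Set.mem_ofPred_eq, not_or, not_le, not_exists, not_not] at hω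
    obtain ⟨h1, h2⟩ := hω
    have hinv : ∀ u : ℝ, |u| ^ p ≤ f ω → |u| ≤ γ ^ 2 := fun u hu => by
      have h3 : |u| ^ p < (γ ^ 2) ^ p := by
        have : γ ^ (2 * p) = (γ ^ 2) ^ p := by rw [Real.rpow_mul hγ.le, Real.rpow_two]
        rw [← this]; linarith
      exact ((Real.rpow_lt_rpow_iff (abs_nonneg _) (by positivity) hp0).1 h3).le
    have k1 : |CV ω - 1| ≤ γ ^ 2 := hinv _ (by simp only [hf]; linarith [sum0 ω])
    have k2 : ∀ i ∈ range n, c i ω ≤ γ ^ 2 := fun i hi => by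
      rw [← h2 i]
      refine (le_abs_self _).trans (hinv _ ?_)
      have := Finset.single_le_sum (f := fun i => |g i ω| ^ p) (fun j _ => by positivity) hi
      have h4 : 0 ≤ |CV ω - 1| ^ p := by positivity
      simp only [hf]; linarith
    have k3 : CV ω = ∑ i ∈ range n, c i ω := by
      rw [hCV]; exact Finset.sum_congr rfl fun i _ => h2 i
    have k4 : ∀ i ∈ range n, ω ∈ A i := fun i hi => by
      refine ⟨mem_range.1 hi, ?_, k2 i hi⟩
      have : ∑ j ∈ range (i + 1), c j ω ≤ ∑ j ∈ range n, c j ω :=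
        Finset.sum_le_sum_of_subset_of_nonneg (by
          intro j hj; have := mem_range.1 hi; have := mem_range.1 hj; exact mem_range.2 (by omega))
          fun j _ _ => c0 j ω
      linarith [(abs_le.1 k1).2]
    refine ⟨fun i hi => Set.indicator_of_mem (k4 i hi) _, ?_, k1⟩
    rw [k3]
    exact Finset.sum_congr rfl fun i hi => Set.indicator_of_mem (k4 i hi) _
end


theorem stmt6 (p : ℝ) (hp : 1 < p) :
    ∃ C : ℝ, 0 < C ∧
      ∀ (Ω : Type) (mΩ : MeasurableSpace Ω) (μ : Measure Ω),
        IsProbabilityMeasure μ →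
        ∀ (ℱ : Filtration ℕ mΩ), ℱ 0 = ⊥ →
        ∀ (n : ℕ) (X : ℕ → Ω → ℝ), X 0 = 0 →
        (∀ i, StronglyMeasurable[ℱ i] (X i)) →
        (∀ i, Integrable (X i) μ) →
        (∀ i ∈ Finset.Icc 1 n, μ[X i | ℱ (i - 1)] =ᵐ[μ] (0 : Ω → ℝ)) →
        ∀ (S : ℕ → Ω → ℝ), (∀ k ω, S k ω = ∑ i ∈ Finset.Icc 1 k, X i ω) →
        ∀ (QV CV : Ω → ℝ),
          (∀ ω, QV ω = ∑ i ∈ Finset.Icc 1 n, (X i ω) ^ 2) →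
          (∀ ω, CV ω = ∑ i ∈ Finset.Icc 1 n, (μ[fun ω' => (X i ω') ^ 2 | ℱ (i - 1)]) ω) →
        (∫ ω, (S n ω) ^ 2 ∂μ) = 1 →
        (∀ i ∈ Finset.Icc 1 n, Integrable (fun ω => |X i ω| ^ (2 * p)) μ) →
        ∀ (N : ℝ),
          N = (∑ i ∈ Finset.Icc 1 n, ∫ ω, |X i ω| ^ (2 * p) ∂μ) + (∫ ω, |CV ω - 1| ^ p ∂μ) →
      ∀ t1 t2 : ℝ, 0 ≤ t1 → 0 ≤ t2 → t1 ≤ 1 → t2 ≤ 1 → t1 + t2 ≤ 1 →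
      ∀ x : ℝ, x ≤ 0 →
        |(μ {ω | S n ω ≤ x * Real.sqrt (t1 * CV ω + t2 * QV ω + (1 - t1 - t2))}).toReal
          - stdNormalCDF x| ≤ C * N ^ (1 / (2 * p + 1)) := by
  obtain ⟨C, hC, hclt⟩ := clt p hp
  obtain ⟨K, hK⟩ : ∃ K, K = 2 * (Real.exp 4 * (⌈2 * p⌉₊.factorial : ℝ) + 2) := ⟨_, rfl⟩
  have hK0 : 0 < K := by rw [hK]; positivity
  refine ⟨C + K + 5, by positivity, ?_⟩
  intro Ω mΩ μ hμ ℱ _ n X _ mX iX cX S hS QV CV hQV hCV _ pX N hN t1 t2 ht1 ht2 _ _ ht x hx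
  set W : Ω → ℝ := fun ω => t1 * CV ω + t2 * QV ω + (1 - t1 - t2) with hW
  set P := (μ {ω | S n ω ≤ x * Real.sqrt (W ω)}).toReal with hP
  have hP' : P = μ.real {ω | S n ω ≤ x * Real.sqrt (W ω)} := rfl
  have hP0 : 0 ≤ P := by rw [hP']; exact measureReal_nonneg
  have hP1 : P ≤ 1 := by rw [hP']; exact measureReal_le_one
  have hN0 : 0 ≤ N := by
    rw [hN]
    exact add_nonneg (Finset.sum_nonneg fun i _ => integral_nonneg fun ω => by positivity)
      (integral_nonneg fun ω => by positivity)
  have hpp : 0 < 2 * p + 1 := by linarith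
  have main : ∀ γ, 0 < γ → N ≤ γ ^ (2 * p + 1) → |P - stdNormalCDF x| ≤ (C + K + 5) * γ := by
    intro γ hγ hNγ
    rcases le_total (1 / 4) γ with h4 | h4
    · have : |P - stdNormalCDF x| ≤ 1 := by
        rw [abs_le]; constructor <;> linarith [cdf_nonneg x, cdf_le_one x]
      nlinarith
    have hγ1 : γ ≤ 1 := by linarith
    have hCV' : ∀ ω, CV ω = ∑ i ∈ range n, (μ[fun ω' => X (i + 1) ω' ^ 2 | ℱ i]) ω := fun ω => by
      rw [hCV, sum_Icc_shift n (fun i => (μ[fun ω' => (X i ω') ^ 2 | ℱ (i - 1)]) ω)]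
      rfl
    have hic : ∀ i < n, i + 1 ∈ Finset.Icc 1 n := fun i hi => Finset.mem_Icc.2 ⟨by omega, by omega⟩
    have hNγ' : (∑ i ∈ range n, ∫ ω, |X (i + 1) ω| ^ (2 * p) ∂μ) + (∫ ω, |CV ω - 1| ^ p ∂μ) ≤ γ ^ (2 * p + 1) := by
      rw [← sum_Icc_shift n (fun i => ∫ ω, |X i ω| ^ (2 * p) ∂μ), ← hN]; exact hNγ
    obtain ⟨Y, v, r, H, R, hYN, B, hB, hgood⟩ := construct p hp ℱ n (fun i => X (i + 1))
      (fun i => (mX (i + 1)).measurable) (fun i => iX (i + 1)) (fun i hi => cX (i + 1) (hic i hi))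
      (fun i hi => pX (i + 1) (hic i hi)) CV hCV' hγ hNγ'
    have hV : μ.real {ω | ∑ i ∈ range n, v i ω < 1 - γ ^ 2} ≤ 3 * γ := by
      have hsub : {ω | ∑ i ∈ range n, v i ω < 1 - γ ^ 2} ⊆ B := by
        intro ω hω
        by_contra hb
        obtain ⟨_, g2, g3⟩ := hgood ω hb
        simp only [Set.mem_ofPred_eq] at hω
        linarith [(abs_le.1 g3).1]
      have := measureReal_mono (μ := μ) hsub
      linarith
    have hbe := hclt Ω mΩ μ hμ ℱ γ Y v H hγ hγ1 n hYN hV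
    have hqv := qv_bound H R hp hγ hγ1 n hYN
    rw [← hK] at hqv
    set E := {ω | γ < |∑ i ∈ range n, Y i ω ^ 2 - ∑ i ∈ range n, v i ω|} with hE
    have hBE : μ.real (B ∪ E) ≤ (1 + K) * γ := (measureReal_union_le _ _).trans (by linarith)
    have hok : ∀ ω, ω ∉ B ∪ E → S n ω = ∑ i ∈ range n, Y i ω ∧ 1 - 2 * γ ≤ W ω ∧ W ω ≤ 1 + 2 * γ := by
      intro ω hω
      rw [Set.mem_union, not_or] at hω
      obtain ⟨g1, g2, g3⟩ := hgood ω hω.1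
      have hE' : |∑ i ∈ range n, Y i ω ^ 2 - ∑ i ∈ range n, v i ω| ≤ γ := by
        have := hω.2
        simp only [hE, Set.mem_ofPred_eq, not_lt] at this
        exact this
      have s1 : S n ω = ∑ i ∈ range n, Y i ω := by
        rw [hS, sum_Icc_shift n (fun i => X i ω)]
        exact (Finset.sum_congr rfl g1).symm
      have s2 : QV ω = ∑ i ∈ range n, Y i ω ^ 2 := by
        rw [hQV, sum_Icc_shift n (fun i => X i ω ^ 2)]
        exact Finset.sum_congr rfl fun i hi => by rw [g1 i hi]
      rw [← s2, g2] at hE'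
      have hg2 : γ ^ 2 ≤ γ := by nlinarith
      obtain ⟨a1, a2⟩ := abs_le.1 hE'
      obtain ⟨b1, b2⟩ := abs_le.1 g3
      refine ⟨s1, ?_, ?_⟩ <;> simp only [hW] <;> nlinarith
    have up : P ≤ μ.real {ω | ∑ i ∈ range n, Y i ω ≤ x / Real.sqrt (1 + 4 * γ)} + (1 + K) * γ := by
      have hsub : {ω | S n ω ≤ x * Real.sqrt (W ω)} ⊆
          {ω | ∑ i ∈ range n, Y i ω ≤ x / Real.sqrt (1 + 4 * γ)} ∪ (B ∪ E) := by
        intro ω hω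
        by_cases hb : ω ∈ B ∪ E
        · exact Or.inr hb
        · left
          obtain ⟨h1, h2, _⟩ := hok ω hb
          simp only [Set.mem_ofPred_eq] at hω ⊢
          rw [← h1]
          refine hω.trans ?_
          rw [div_eq_mul_inv, ← Real.sqrt_inv]
          refine mul_le_mul_of_nonpos_left (Real.sqrt_le_sqrt ?_) hx
          refine le_trans ?_ h2
          rw [inv_le_iff_one_le_mul₀ (by positivity)]
          nlinarith
      rw [hP']
      exact (measureReal_mono hsub).trans ((measureReal_union_le _ _).trans (by linarith))
    have lo : μ.real {ω | ∑ i ∈ range n, Y i ω ≤ x * Real.sqrt (1 + 2 * γ)} ≤ P + (1 + K) * γ := by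
      have hsub : {ω | ∑ i ∈ range n, Y i ω ≤ x * Real.sqrt (1 + 2 * γ)} ⊆
          {ω | S n ω ≤ x * Real.sqrt (W ω)} ∪ (B ∪ E) := by
        intro ω hω
        by_cases hb : ω ∈ B ∪ E
        · exact Or.inr hb
        · left
          obtain ⟨h1, _, h3⟩ := hok ω hb
          simp only [Set.mem_ofPred_eq] at hω ⊢
          rw [h1]
          exact hω.trans (mul_le_mul_of_nonpos_left (Real.sqrt_le_sqrt h3) hx)
      rw [hP']
      exact (measureReal_mono hsub).trans ((measureReal_union_le _ _).trans (by linarith))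
    have l1 := scale_lip x (4 * γ) (by positivity)
    have l2 := scale_lip (x * Real.sqrt (1 + 2 * γ)) (2 * γ) (by positivity)
    have hsq : Real.sqrt (1 + 2 * γ) ≠ 0 := (Real.sqrt_pos.2 (by positivity)).ne'
    rw [mul_div_assoc, div_self hsq, mul_one] at l2
    have b1 := hbe (x / Real.sqrt (1 + 4 * γ))
    have b2 := hbe (x * Real.sqrt (1 + 2 * γ))
    rw [abs_le] at l1 l2 b1 b2 ⊢
    constructor
    · linarith [b2.1, l2.2]
    · linarith [b1.2, l1.2]
  have hC5 : 0 < C + K + 5 := by positivity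
  rw [← div_le_iff₀' hC5]
  refine le_of_forall_gt_imp_ge_of_dense fun γ hγ => ?_
  have hγ0 : 0 < γ := lt_of_le_of_lt (by positivity) hγ
  rw [div_le_iff₀' hC5]
  refine main γ hγ0 ?_
  have := Real.rpow_le_rpow (by positivity) hγ.le hpp.le
  rwa [← Real.rpow_mul hN0, one_div_mul_cancel hpp.ne', Real.rpow_one] at this
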